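/- arXiv:1712.06254 — 2 statements merged into one kernel-verified Lean document; each statement's English description precedes it below -/
import Mathlib

section
/- For every Λ > 0 there exists a constant C > 0, depending only on φ and Λ, with the following property. Let x ∈ ℝ⁴ and r > 0, suppose u is harmonic on an open set containing the closed ball B̄_x(4r), and suppose H_φ(x,t) > 0 and N_φ(x,t) ≤ Λ for all t ∈ (0, 4r]. Then ∫_{B_x(3r)∖B_x(r/3)} |∂_{η_x}u(y) − N_φ(x,|y−x|)·u(y)|² dy ≤ C·r·H_φ(x,r)·W_{r/4}^{4r}(x). -/
open Metric MeasureTheory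
open scoped RealInnerProductSpace

noncomputable section

abbrev E4 := EuclideanSpace ℝ (Fin 4)

variable {E : Type*} [NormedAddCommGroup E] [InnerProductSpace ℝ E] [FiniteDimensional ℝ E]

/-- `u` is smooth and harmonic (the Laplacian, i.e. the sum of the pure second
derivatives in the coordinate directions, vanishes) on `Ω`. -/
def IsHarmonicOn (u : E4 → E) (Ω : Set E4) : Prop :=
  ContDiffOn ℝ (⊤ : ℕ∞) u Ω ∧
  ∀ x ∈ Ω, ∑ i : Fin 4,
    iteratedFDeriv ℝ 2 u x ![EuclideanSpace.single i (1:ℝ), EuclideanSpace.single i 1] = 0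

/-- `|∇u(y)|²`, the squared Frobenius norm of the derivative of `u` at `y`. -/
def gradSq (u : E4 → E) (y : E4) : ℝ :=
  ∑ i : Fin 4, ‖fderiv ℝ u y (EuclideanSpace.single i (1:ℝ))‖ ^ 2

/-- `D_φ(x,r) = ∫ |∇u(y)|² φ(|y−x|/r) dy`. -/
def Dphi (φ : ℝ → ℝ) (u : E4 → E) (x : E4) (r : ℝ) : ℝ :=
  ∫ y, gradSq u y * φ (‖y - x‖ / r)

/-- `H_φ(x,r) = −∫ |u(y)|² |y−x|⁻¹ φ'(|y−x|/r) dy`. -/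
def Hphi (φ : ℝ → ℝ) (u : E4 → E) (x : E4) (r : ℝ) : ℝ :=
  -∫ y, ‖u y‖ ^ 2 * ‖y - x‖⁻¹ * deriv φ (‖y - x‖ / r)

/-- `E_φ(x,r) = −∫ |∂_{ν_x}u(y)|² |y−x| φ'(|y−x|/r) dy`, where `ν_x(y) = (y−x)/|y−x|`. -/
def Ephi (φ : ℝ → ℝ) (u : E4 → E) (x : E4) (r : ℝ) : ℝ :=
  -∫ y, ‖fderiv ℝ u y (‖y - x‖⁻¹ • (y - x))‖ ^ 2 * ‖y - x‖ * deriv φ (‖y - x‖ / r)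

/-- The smoothed frequency `N_φ(x,r) = r D_φ(x,r) / H_φ(x,r)`. -/
def Nphi (φ : ℝ → ℝ) (u : E4 → E) (x : E4) (r : ℝ) : ℝ :=
  r * Dphi φ u x r / Hphi φ u x r


def psi (φ : ℝ → ℝ) (q : ℝ) : ℝ := φ (Real.sqrt q)

section cutoff
variable {φ : ℝ → ℝ}

theorem psi_one (hφ1 : ∀ t ≤ (3/4 : ℝ), φ t = 1) {q : ℝ} (hq : q ≤ 9/16) : psi φ q = 1 := by
  apply hφ1
  rw [Real.sqrt_le_left (by norm_num)]
  linarith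

theorem psi_zero (hφ0 : ∀ t, (1:ℝ) ≤ t → φ t = 0) {q : ℝ} (hq : 1 ≤ q) : psi φ q = 0 := by
  apply hφ0
  rwa [Real.one_le_sqrt]

theorem psi_contDiff (hφs : ContDiff ℝ (⊤ : ℕ∞) φ) (hφ1 : ∀ t ≤ (3/4 : ℝ), φ t = 1) :
    ContDiff ℝ (⊤ : ℕ∞) (psi φ) := by
  rw [contDiff_iff_contDiffAt]
  intro q
  by_cases hq : q < 9/16
  · have : psi φ =ᶠ[nhds q] fun _ => (1:ℝ) := by
      filter_upwards [Iio_mem_nhds hq] with p hp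
      exact psi_one hφ1 hp.le
    exact contDiffAt_const.congr_of_eventuallyEq this
  · have hq' : q ≠ 0 := by intro h; rw [h] at hq; norm_num at hq
    exact hφs.contDiffAt.comp q (Real.contDiffAt_sqrt hq')

theorem psi_antitone (hφa : Antitone φ) : Antitone (psi φ) := fun _ _ h => hφa (Real.sqrt_le_sqrt h)

theorem dpsi_nonpos (hφa : Antitone φ) (q : ℝ) : deriv (psi φ) q ≤ 0 := (psi_antitone hφa).deriv_nonpos

theorem dpsi_low (hφ1 : ∀ t ≤ (3/4 : ℝ), φ t = 1) {q : ℝ} (hq : q < 9/16) : deriv (psi φ) q = 0 := by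
  have : psi φ =ᶠ[nhds q] fun _ => (1:ℝ) := by
    filter_upwards [Iio_mem_nhds hq] with p hp
    exact psi_one hφ1 hp.le
  rw [this.deriv_eq]; simp

theorem dpsi_high (hφ0 : ∀ t, (1:ℝ) ≤ t → φ t = 0) {q : ℝ} (hq : 1 < q) : deriv (psi φ) q = 0 := by
  have : psi φ =ᶠ[nhds q] fun _ => (0:ℝ) := by
    filter_upwards [Ioi_mem_nhds hq] with p hp
    exact psi_zero hφ0 (le_of_lt hp)
  rw [this.deriv_eq]; simp

theorem phi_eq {s : ℝ} (hs : 0 ≤ s) : φ s = psi φ (s ^ 2) := by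
  rw [psi, Real.sqrt_sq hs]

theorem dphi_eq (hφs : ContDiff ℝ (⊤ : ℕ∞) φ) (hφ1 : ∀ t ≤ (3/4 : ℝ), φ t = 1)
    {s : ℝ} (hs : 0 < s) : deriv φ s = 2 * s * deriv (psi φ) (s ^ 2) := by
  have h1 : φ =ᶠ[nhds s] fun s => psi φ (s ^ 2) := by
    filter_upwards [Ioi_mem_nhds hs] with p hp
    exact phi_eq (le_of_lt hp)
  rw [h1.deriv_eq]
  have h2 : HasDerivAt (psi φ) (deriv (psi φ) (s^2)) (s^2) :=
    ((psi_contDiff hφs hφ1).differentiable (by simp) _).hasDerivAt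
  have h3 : HasDerivAt (fun s => psi φ (s ^ 2)) _ s :=
    HasDerivAt.comp (h := fun s : ℝ => s ^ 2) s h2 (hasDerivAt_pow 2 s)
  rw [h3.deriv]; norm_num; ring

end cutoff

/-- bounded derivative -/
theorem bdd_of_supp {f : ℝ → ℝ} (hf : Continuous f) (h0 : ∀ q, q < 0 → f q = 0) (h1 : ∀ q, 1 < q → f q = 0) :
    ∃ M, ∀ q, |f q| ≤ M := by
  obtain ⟨M, hM⟩ := (isCompact_Icc (a := (0:ℝ)) (b := 1)).exists_bound_of_continuousOn hf.continuousOn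
  refine ⟨max M 0, fun q => ?_⟩
  by_cases hq : q ∈ Set.Icc (0:ℝ) 1
  · exact (hM q hq).trans (le_max_left _ _)
  · have : f q = 0 := by
      by_cases h : q < 0
      · exact h0 q h
      · apply h1; by_contra h'; exact hq ⟨by linarith, by linarith⟩
    simp [this]

theorem hasDerivAt_q (y x : E4) {t : ℝ} (ht : 0 < t) :
    HasDerivAt (fun s : ℝ => ‖y - x‖ ^ 2 / s ^ 2) (-(2 * ‖y - x‖ ^ 2 / t ^ 3)) t := by
  have h := (hasDerivAt_const t (‖y - x‖ ^ 2)).div (hasDerivAt_pow 2 t) (by positivity)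
  refine HasDerivAt.congr_deriv h ?_
  field_simp
  push_cast
  ring

theorem hasDerivAt_param {ρ : E4 → ℝ} (hρ : Continuous ρ) (hc : HasCompactSupport ρ) (x : E4)
    {h : ℝ → ℝ} (hh : ContDiff ℝ 1 h) {M : ℝ} (hM : ∀ q, |deriv h q| ≤ M) {t : ℝ} (ht : 0 < t) :
    HasDerivAt (fun s => ∫ y, ρ y * h (‖y - x‖ ^ 2 / s ^ 2))
      (∫ y, ρ y * (deriv h (‖y - x‖ ^ 2 / t ^ 2) * (-(2 * ‖y - x‖ ^ 2 / t ^ 3)))) t := by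
  have hc' : Continuous (deriv h) := hh.continuous_deriv le_rfl
  have hcont : Continuous h := hh.continuous
  have hs : Set.Ioo (t/2) (2*t) ∈ nhds t := Ioo_mem_nhds (by linarith) (by linarith)
  have key := hasDerivAt_integral_of_dominated_loc_of_deriv_le (μ := (volume : Measure E4))
    (F := fun s y => ρ y * h (‖y - x‖ ^ 2 / s ^ 2))
    (F' := fun s y => ρ y * (deriv h (‖y - x‖ ^ 2 / s ^ 2) * (-(2 * ‖y - x‖ ^ 2 / s ^ 3))))
    (bound := fun y => |ρ y| * (M * (2 * ‖y - x‖ ^ 2 / (t/2) ^ 3))) hs ?_ ?_ ?_ ?_ ?_ ?_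
  · exact key.2
  · refine Filter.Eventually.of_forall fun s => ?_
    exact (Continuous.aestronglyMeasurable (by fun_prop))
  · apply Continuous.integrable_of_hasCompactSupport (by fun_prop)
    exact hc.mul_right
  · exact (Continuous.aestronglyMeasurable (by fun_prop))
  · refine Filter.Eventually.of_forall fun y s hs => ?_
    have hs0 : 0 < s := by have := hs.1; linarith
    rw [norm_mul, norm_mul, Real.norm_eq_abs, Real.norm_eq_abs, Real.norm_eq_abs, abs_neg,
      abs_of_nonneg (a := 2 * ‖y - x‖ ^ 2 / s ^ 3) (by positivity)]
    have : 0 ≤ M := (abs_nonneg _).trans (hM 0)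
    gcongr
    · exact hM _
    · exact hs.1.le
  · apply Continuous.integrable_of_hasCompactSupport (by fun_prop)
    exact (hc.norm).mul_right
  · refine Filter.Eventually.of_forall fun y s hs => ?_
    have hs0 : 0 < s := by have := hs.1; linarith
    have h2 : HasDerivAt h (deriv h (‖y - x‖ ^ 2 / s ^ 2)) (‖y - x‖ ^ 2 / s ^ 2) :=
      (hh.differentiable (by simp) _).hasDerivAt
    exact (h2.comp s (hasDerivAt_q y x hs0)).const_mul _

abbrev ee (i : Fin 4) : E4 := EuclideanSpace.single i (1:ℝ)

theorem int_div {V : Fin 4 → E4 → ℝ} (hV : ∀ j, ContDiff ℝ 1 (V j)) (hc : ∀ j, HasCompactSupport (V j))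
    {g : E4 → ℝ} (hg : ContDiff ℝ 1 g) :
    ∫ y, g y * ∑ j, fderiv ℝ (V j) y (ee j) = -∫ y, ∑ j, V j y * fderiv ℝ g y (ee j) := by
  have hV' : ∀ j, Continuous fun y => fderiv ℝ (V j) y (ee j) := fun j =>
    ((hV j).continuous_fderiv (by simp)).clm_apply continuous_const
  have hg' : ∀ j, Continuous fun y => fderiv ℝ g y (ee j) := fun j =>
    (hg.continuous_fderiv (by simp)).clm_apply continuous_const
  have hVc : ∀ j, HasCompactSupport fun y => fderiv ℝ (V j) y (ee j) := fun j =>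
    (hc j).fderiv_apply ℝ _
  have i1 : ∀ j, Integrable fun y => g y * fderiv ℝ (V j) y (ee j) := fun j =>
    (hg.continuous.mul (hV' j)).integrable_of_hasCompactSupport (hVc j).mul_left
  have i2 : ∀ j, Integrable fun y => V j y * fderiv ℝ g y (ee j) := fun j =>
    ((hV j).continuous.mul (hg' j)).integrable_of_hasCompactSupport (hc j).mul_right
  have i3 : ∀ j, Integrable fun y => g y * V j y := fun j =>
    (hg.continuous.mul (hV j).continuous).integrable_of_hasCompactSupport (hc j).mul_left
  simp_rw [Finset.mul_sum]
  rw [integral_finsetSum _ (fun j _ => i1 j), integral_finsetSum _ (fun j _ => i2 j),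
    ← Finset.sum_neg_distrib]
  refine Finset.sum_congr rfl fun j _ => ?_
  rw [integral_mul_fderiv_eq_neg_fderiv_mul_of_integrable]
  · simp_rw [mul_comm]
  · simpa only [mul_comm] using i2 j
  · exact i1 j
  · exact i3 j
  · exact fun y _ => hg.differentiable (by simp) y
  · exact fun y _ => (hV j).differentiable (by simp) y

theorem contDiff_q (x : E4) (t : ℝ) : ContDiff ℝ (⊤ : ℕ∞) (fun y : E4 => ‖y - x‖ ^ 2 / t ^ 2) :=
  ((contDiff_id.sub contDiff_const).norm_sq ℝ).div_const _

theorem fderiv_hq (x : E4) (t : ℝ) {h : ℝ → ℝ} (hh : ContDiff ℝ 1 h) (y : E4) (j : Fin 4) :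
    fderiv ℝ (fun y : E4 => h (‖y - x‖ ^ 2 / t ^ 2)) y (ee j) =
      deriv h (‖y - x‖ ^ 2 / t ^ 2) * (2 / t ^ 2 * (y j - x j)) := by
  have h1 : HasFDerivAt (fun y : E4 => ‖y - x‖ ^ 2) (2 • (innerSL ℝ (y - x))) y := by
    simpa using ((hasFDerivAt_id y).sub_const x).norm_sq
  have h2 : HasDerivAt h (deriv h (‖y - x‖ ^ 2 / t ^ 2)) (‖y - x‖ ^ 2 / t ^ 2) :=
    (hh.differentiable (by simp) _).hasDerivAt
  have h1' : HasFDerivAt (fun y : E4 => ‖y - x‖ ^ 2 / t ^ 2) ((t^2)⁻¹ • (2 • (innerSL ℝ (y - x)))) y := by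
    simpa [div_eq_mul_inv] using h1.mul_const ((t^2)⁻¹)
  have h3 := h2.comp_hasFDerivAt y h1'
  have h4 := h3.fderiv
  simp only [Function.comp_def] at h4
  rw [h4]
  have h5 : (innerSL ℝ (y - x)) (ee j) = y j - x j := by
    simp [EuclideanSpace.inner_single_right]
  simp only [smul_apply, h5, smul_eq_mul, nsmul_eq_mul]
  push_cast
  ring

theorem int_div_q {V : Fin 4 → E4 → ℝ} (hV : ∀ j, ContDiff ℝ 1 (V j)) (hc : ∀ j, HasCompactSupport (V j))
    (x : E4) (t : ℝ) {h : ℝ → ℝ} (hh : ContDiff ℝ 1 h) :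
    ∫ y, h (‖y - x‖ ^ 2 / t ^ 2) * ∑ j, fderiv ℝ (V j) y (ee j) =
      -(2 / t ^ 2) * ∫ y, (∑ j, V j y * (y j - x j)) * deriv h (‖y - x‖ ^ 2 / t ^ 2) := by
  rw [int_div hV hc (g := fun y => h (‖y - x‖ ^ 2 / t ^ 2)) (hh.comp ((contDiff_q x t).of_le (by simp)))]
  rw [neg_mul, ← integral_const_mul]
  congr 2
  ext y
  simp_rw [fderiv_hq x t hh, Finset.sum_mul, Finset.mul_sum]
  refine Finset.sum_congr rfl fun j _ => ?_
  ring

theorem apply_sub_expand {G : Type*} [NormedAddCommGroup G] [NormedSpace ℝ G] (L : E4 →L[ℝ] G) (z : E4) :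
    L z = ∑ j, z j • L (ee j) := by
  have h : z = ∑ j, z j • ee j := by
    have := (EuclideanSpace.basisFun (Fin 4) ℝ).sum_repr z
    simpa using this.symm
  conv_lhs => rw [h]
  rw [map_sum]
  simp

section ident
variable {F : Type*} [NormedAddCommGroup F] [InnerProductSpace ℝ F]
  {v : E4 → F}

theorem cd_fderiv (hv : ContDiff ℝ (⊤ : ℕ∞) v) : ContDiff ℝ (⊤ : ℕ∞) (fderiv ℝ v) :=
  hv.fderiv_right (by simp)

theorem cd_dv (hv : ContDiff ℝ (⊤ : ℕ∞) v) (j : Fin 4) :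
    ContDiff ℝ (⊤ : ℕ∞) (fun y => fderiv ℝ v y (ee j)) :=
  (cd_fderiv hv).clm_apply contDiff_const

theorem cd_eta (hv : ContDiff ℝ (⊤ : ℕ∞) v) (x : E4) :
    ContDiff ℝ (⊤ : ℕ∞) (fun y => fderiv ℝ v y (y - x)) :=
  (cd_fderiv hv).clm_apply (contDiff_id.sub contDiff_const)

theorem cd_gradSq (hv : ContDiff ℝ (⊤ : ℕ∞) v) : ContDiff ℝ (⊤ : ℕ∞) (gradSq v) := by
  unfold gradSq
  exact ContDiff.sum fun i _ => (cd_dv hv i).norm_sq ℝ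

theorem cs_dv (hc : HasCompactSupport v) (w : E4 → E4) :
    HasCompactSupport (fun y => fderiv ℝ v y (w y)) := by
  refine (hc.fderiv ℝ).mono' ?_
  intro y hy
  apply subset_tsupport
  intro h
  apply hy
  simp [h]

theorem cs_gradSq (hc : HasCompactSupport v) : HasCompactSupport (gradSq v) := by
  refine (hc.fderiv ℝ).mono' ?_
  intro y hy
  apply subset_tsupport
  intro h
  apply hy
  simp [gradSq, h]

theorem cs_inner {a b : E4 → F} (hc : HasCompactSupport a) :
    HasCompactSupport (fun y => ⟪a y, b y⟫) := by
  refine hc.mono ?_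
  intro y hy h
  apply hy
  simp [h]

theorem fderiv_dv (hv : ContDiff ℝ (⊤ : ℕ∞) v) (j : Fin 4) (y z : E4) :
    fderiv ℝ (fun y => fderiv ℝ v y (ee j)) y z = fderiv ℝ (fderiv ℝ v) y z (ee j) := by
  have h : HasFDerivAt (fderiv ℝ v) (fderiv ℝ (fderiv ℝ v) y) y :=
    ((cd_fderiv hv).differentiable (by simp) y).hasFDerivAt
  have := (h.clm_apply (hasFDerivAt_const (ee j) y)).fderiv
  rw [this]; simp

theorem fderiv_eta (hv : ContDiff ℝ (⊤ : ℕ∞) v) (x y z : E4) :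
    fderiv ℝ (fun y => fderiv ℝ v y (y - x)) y z =
      fderiv ℝ (fderiv ℝ v) y z (y - x) + fderiv ℝ v y z := by
  have h : HasFDerivAt (fderiv ℝ v) (fderiv ℝ (fderiv ℝ v) y) y :=
    ((cd_fderiv hv).differentiable (by simp) y).hasFDerivAt
  have := (h.clm_apply ((hasFDerivAt_id y).sub_const x)).fderiv
  simp only [id] at this
  rw [this]; simp [add_comm]

theorem fderiv_gradSq (hv : ContDiff ℝ (⊤ : ℕ∞) v) (y z : E4) :
    fderiv ℝ (gradSq v) y z =
      ∑ i, 2 * ⟪fderiv ℝ v y (ee i), fderiv ℝ (fderiv ℝ v) y z (ee i)⟫ := by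
  have h : HasFDerivAt (gradSq v) _ y := HasFDerivAt.fun_sum (u := Finset.univ)
    (fun i _ => (((cd_dv hv i).differentiable (by simp) y).hasFDerivAt).norm_sq)
  rw [h.fderiv]
  simp [fderiv_dv hv]

theorem snd_symm (hv : ContDiff ℝ (⊤ : ℕ∞) v) (y a b : E4) :
    fderiv ℝ (fderiv ℝ v) y a b = fderiv ℝ (fderiv ℝ v) y b a :=
  (hv.contDiffAt.isSymmSndFDerivAt (by simp only [minSmoothness_of_isRCLikeNormedField]; exact WithTop.coe_le_coe.2 (le_top : (2:ℕ∞) ≤ ⊤))) a b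

theorem norm_sq_E4 (z : E4) : ‖z‖ ^ 2 = ∑ j, z j * z j := by
  rw [EuclideanSpace.norm_sq_eq]
  simp [pow_two]

theorem fderiv_coord (x y : E4) (j : Fin 4) :
    HasFDerivAt (fun y : E4 => y j - x j) (EuclideanSpace.proj j : E4 →L[ℝ] ℝ) y :=
  (EuclideanSpace.proj j : E4 →L[ℝ] ℝ).hasFDerivAt.sub_const (x j)

theorem cd_coord (x : E4) (j : Fin 4) : ContDiff ℝ (⊤ : ℕ∞) (fun y : E4 => y j - x j) :=
  (EuclideanSpace.proj j : E4 →L[ℝ] ℝ).contDiff.sub contDiff_const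

theorem q_ge {x y : E4} {t : ℝ} (ht : 0 < t) (h : t ≤ ‖y - x‖) : 1 ≤ ‖y - x‖ ^ 2 / t ^ 2 := by
  rw [le_div_iff₀ (by positivity), one_mul]
  gcongr

theorem ident1 (hv : ContDiff ℝ (⊤ : ℕ∞) v) (hc : HasCompactSupport v) {x : E4} {R : ℝ}
    (hharm : ∀ y ∈ ball x R, ∑ i, fderiv ℝ (fderiv ℝ v) y (ee i) (ee i) = 0)
    {h : ℝ → ℝ} (hh : ContDiff ℝ 1 h) (h0 : ∀ q, 1 ≤ q → h q = 0) {t : ℝ} (ht : 0 < t) (htR : t ≤ R) :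
    ∫ y, gradSq v y * h (‖y - x‖ ^ 2 / t ^ 2) =
      -(2 / t ^ 2) * ∫ y, ⟪v y, fderiv ℝ v y (y - x)⟫ * deriv h (‖y - x‖ ^ 2 / t ^ 2) := by
  have key := int_div_q (V := fun j y => ⟪v y, fderiv ℝ v y (ee j)⟫)
    (fun j => ((hv.inner ℝ (cd_dv hv j)).of_le (by simp))) (fun j => cs_inner hc) x t hh
  convert key using 2
  · ext y
    by_cases hy : y ∈ ball x R
    · have : ∑ j, fderiv ℝ (fun y => ⟪v y, fderiv ℝ v y (ee j)⟫) y (ee j) = gradSq v y := by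
        have h1 : ∀ j, fderiv ℝ (fun y => ⟪v y, fderiv ℝ v y (ee j)⟫) y (ee j) =
            ⟪v y, fderiv ℝ (fderiv ℝ v) y (ee j) (ee j)⟫ + ‖fderiv ℝ v y (ee j)‖ ^ 2 := by
          intro j
          rw [fderiv_inner_apply ℝ (hv.differentiable (by simp) y)
            ((cd_dv hv j).differentiable (by simp) y), fderiv_dv hv, real_inner_self_eq_norm_sq]
        simp_rw [h1]
        rw [Finset.sum_add_distrib, ← inner_sum, hharm y hy]
        simp [gradSq]
      rw [this, mul_comm]
    · have : h (‖y - x‖ ^ 2 / t ^ 2) = 0 := by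
        apply h0; apply q_ge ht
        rw [mem_ball, dist_eq_norm, not_lt] at hy
        linarith
      simp [this]
  · congr 1
    ext y
    congr 1
    rw [apply_sub_expand (fderiv ℝ v y) (y - x), inner_sum]
    refine Finset.sum_congr rfl fun j _ => ?_
    rw [inner_smul_right]; simp [mul_comm]

theorem ident2 (hv : ContDiff ℝ (⊤ : ℕ∞) v) (hc : HasCompactSupport v) (x : E4)
    {h : ℝ → ℝ} (hh : ContDiff ℝ 1 h) (t : ℝ) :
    ∫ y, (4 * ‖v y‖ ^ 2 + 2 * ⟪v y, fderiv ℝ v y (y - x)⟫) * h (‖y - x‖ ^ 2 / t ^ 2) =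
      -(2 / t ^ 2) * ∫ y, (‖v y‖ ^ 2 * ‖y - x‖ ^ 2) * deriv h (‖y - x‖ ^ 2 / t ^ 2) := by
  have hcs : HasCompactSupport (fun y => ‖v y‖ ^ 2) := by
    simpa only [real_inner_self_eq_norm_sq] using cs_inner (b := v) hc
  have key := int_div_q (V := fun j y => (y j - x j) * ‖v y‖ ^ 2)
    (fun j => (((cd_coord x j).mul (hv.norm_sq ℝ)).of_le (by simp)))
    (fun j => hcs.mul_left) x t hh
  convert key using 2
  · ext y
    have : ∑ j, fderiv ℝ (fun y : E4 => (y j - x j) * ‖v y‖ ^ 2) y (ee j) =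
        4 * ‖v y‖ ^ 2 + 2 * ⟪v y, fderiv ℝ v y (y - x)⟫ := by
      have h1 : ∀ j, fderiv ℝ (fun y : E4 => (y j - x j) * ‖v y‖ ^ 2) y (ee j) =
          (y j - x j) * (2 * ⟪v y, fderiv ℝ v y (ee j)⟫) + ‖v y‖ ^ 2 := by
        intro j
        have := (fderiv_coord x y j).fun_mul ((hv.differentiable (by simp) y).hasFDerivAt.norm_sq)
        rw [this.fderiv]
        simp
      simp_rw [h1]
      rw [Finset.sum_add_distrib, apply_sub_expand (fderiv ℝ v y) (y - x), inner_sum, Finset.mul_sum]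
      simp [inner_smul_right]
      rw [add_comm]
      congr 1
      refine Finset.sum_congr rfl fun j _ => by ring
    rw [this, mul_comm]
  · congr 1
    ext y
    congr 1
    rw [norm_sq_E4 (y - x), Finset.mul_sum]
    refine Finset.sum_congr rfl fun j _ => ?_
    simp; ring

theorem ident3 (hv : ContDiff ℝ (⊤ : ℕ∞) v) (hc : HasCompactSupport v) {x : E4} {R : ℝ}
    (hharm : ∀ y ∈ ball x R, ∑ i, fderiv ℝ (fderiv ℝ v) y (ee i) (ee i) = 0)
    {h : ℝ → ℝ} (hh : ContDiff ℝ 1 h) (h0 : ∀ q, 1 ≤ q → h q = 0) {t : ℝ} (ht : 0 < t) (htR : t ≤ R) :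
    ∫ y, (2 * gradSq v y) * h (‖y - x‖ ^ 2 / t ^ 2) =
      -(2 / t ^ 2) * ∫ y, (gradSq v y * ‖y - x‖ ^ 2 - 2 * ‖fderiv ℝ v y (y - x)‖ ^ 2) *
        deriv h (‖y - x‖ ^ 2 / t ^ 2) := by
  have key := int_div_q
    (V := fun j y => gradSq v y * (y j - x j) - 2 * ⟪fderiv ℝ v y (y - x), fderiv ℝ v y (ee j)⟫)
    (fun j => ((((cd_gradSq hv).mul (cd_coord x j)).sub
      (contDiff_const.mul ((cd_eta hv x).inner ℝ (cd_dv hv j)))).of_le (by simp)))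
    (fun j => (cs_gradSq hc).mul_right.sub (HasCompactSupport.mul_left (cs_inner (cs_dv hc _)))) x t hh
  convert key using 2
  · ext y
    by_cases hy : y ∈ ball x R
    · have : ∑ j, fderiv ℝ (fun y : E4 => gradSq v y * (y j - x j) -
          2 * ⟪fderiv ℝ v y (y - x), fderiv ℝ v y (ee j)⟫) y (ee j) = 2 * gradSq v y := by
        have h1 : ∀ j, fderiv ℝ (fun y : E4 => gradSq v y * (y j - x j) -
            2 * ⟪fderiv ℝ v y (y - x), fderiv ℝ v y (ee j)⟫) y (ee j) =
            gradSq v y + (∑ i, 2 * ((y j - x j) *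
              ⟪fderiv ℝ v y (ee i), fderiv ℝ (fderiv ℝ v) y (ee j) (ee i)⟫)) -
            2 * ⟪fderiv ℝ v y (y - x), fderiv ℝ (fderiv ℝ v) y (ee j) (ee j)⟫
            - 2 * ⟪fderiv ℝ v y (ee j), fderiv ℝ (fderiv ℝ v) y (y - x) (ee j)⟫
            - 2 * ‖fderiv ℝ v y (ee j)‖ ^ 2 := by
          intro j
          have a1 := ((cd_gradSq hv).differentiable (by simp) y).hasFDerivAt.fun_mul (fderiv_coord x y j)
          have a2 := (((cd_eta hv x).differentiable (by simp) y).inner ℝ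
            ((cd_dv hv j).differentiable (by simp) y)).hasFDerivAt.const_mul 2
          have a3 := (a1.fun_sub a2).fderiv
          rw [a3]
          simp only [sub_apply, add_apply, smul_apply, smul_eq_mul]
          rw [fderiv_inner_apply ℝ ((cd_eta hv x).differentiable (by simp) y)
            ((cd_dv hv j).differentiable (by simp) y), fderiv_dv hv, fderiv_eta hv, fderiv_gradSq hv,
            inner_add_left, real_inner_self_eq_norm_sq, snd_symm hv y (ee j) (y - x),
            real_inner_comm (fderiv ℝ v y (ee j)) (fderiv ℝ (fderiv ℝ v) y (y - x) (ee j)),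
            Finset.mul_sum]
          have : (EuclideanSpace.proj j : E4 →L[ℝ] ℝ) (ee j) = 1 := by simp
          rw [this]
          have : ∀ i, (y j - x j) * (2 * ⟪fderiv ℝ v y (ee i), fderiv ℝ (fderiv ℝ v) y (ee j) (ee i)⟫)
            = 2 * ((y j - x j) * ⟪fderiv ℝ v y (ee i), fderiv ℝ (fderiv ℝ v) y (ee j) (ee i)⟫) :=
            fun i => by ring
          simp_rw [this]
          ring
        simp_rw [h1]
        simp only [Finset.sum_sub_distrib, Finset.sum_add_distrib, ← Finset.mul_sum]
        rw [← inner_sum, hharm y hy]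
        have h2 : ∀ i, ∑ j, (y j - x j) * ⟪fderiv ℝ v y (ee i), fderiv ℝ (fderiv ℝ v) y (ee j) (ee i)⟫
            = ⟪fderiv ℝ v y (ee i), fderiv ℝ (fderiv ℝ v) y (y - x) (ee i)⟫ := by
          intro i
          rw [apply_sub_expand (fderiv ℝ (fderiv ℝ v) y) (y - x)]
          simp [inner_sum, inner_smul_right]
        have h3 : ∑ j, (y j - x j) * ∑ i, ⟪fderiv ℝ v y (ee i), fderiv ℝ (fderiv ℝ v) y (ee j) (ee i)⟫
            = ∑ i, ⟪fderiv ℝ v y (ee i), fderiv ℝ (fderiv ℝ v) y (y - x) (ee i)⟫ := by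
          simp_rw [Finset.mul_sum]
          rw [Finset.sum_comm]
          simp_rw [h2]
        rw [h3]
        simp [gradSq]
        ring
      rw [this, mul_comm]
    · have : h (‖y - x‖ ^ 2 / t ^ 2) = 0 := by
        apply h0; apply q_ge ht
        rw [mem_ball, dist_eq_norm, not_lt] at hy
        linarith
      simp [this]
  · congr 1
    ext y
    congr 1
    simp_rw [sub_mul]
    rw [Finset.sum_sub_distrib, norm_sq_E4 (y - x), Finset.mul_sum]
    congr 1
    · refine Finset.sum_congr rfl fun j _ => ?_
      simp; ring
    · conv_lhs => rw [← real_inner_self_eq_norm_sq]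
      conv_lhs => enter [2, 3]; rw [apply_sub_expand (fderiv ℝ v y) (y - x)]
      rw [inner_sum, Finset.mul_sum]
      refine Finset.sum_congr rfl fun j _ => ?_
      rw [inner_smul_right]; simp; ring
end ident

section freq
variable {F : Type*} [NormedAddCommGroup F] [InnerProductSpace ℝ F]

def HH (φ : ℝ → ℝ) (v : E4 → F) (x : E4) (t : ℝ) : ℝ :=
  -(2 / t) * ∫ y, ‖v y‖ ^ 2 * deriv (psi φ) (‖y - x‖ ^ 2 / t ^ 2)

def DD (φ : ℝ → ℝ) (v : E4 → F) (x : E4) (t : ℝ) : ℝ :=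
  ∫ y, gradSq v y * psi φ (‖y - x‖ ^ 2 / t ^ 2)

def NN (φ : ℝ → ℝ) (v : E4 → F) (x : E4) (t : ℝ) : ℝ := t * DD φ v x t / HH φ v x t

def II (φ : ℝ → ℝ) (v : E4 → F) (x : E4) (t : ℝ) : ℝ :=
  ∫ y, ‖fderiv ℝ v y (y - x) - NN φ v x t • v y‖ ^ 2 * -deriv (psi φ) (‖y - x‖ ^ 2 / t ^ 2)

theorem Hphi_eq {φ : ℝ → ℝ} (hφs : ContDiff ℝ (⊤ : ℕ∞) φ)
    (hφ1 : ∀ t ≤ (3/4 : ℝ), φ t = 1) (hφ0 : ∀ t, (1:ℝ) ≤ t → φ t = 0) {u v : E4 → F} {x : E4} {R : ℝ}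
    (huv : ∀ y ∈ ball x R, v y = u y) {t : ℝ} (ht : 0 < t) (htR : t < R) :
    Hphi φ u x t = HH φ v x t := by
  unfold Hphi HH
  rw [neg_mul, ← integral_const_mul]
  congr 2
  ext y
  by_cases hyx : y = x
  · subst hyx
    rw [dpsi_low hφ1 (by simp)]; simp
  have hpos : 0 < ‖y - x‖ := norm_pos_iff.2 (sub_ne_zero.2 hyx)
  rw [dphi_eq hφs hφ1 (by positivity), div_pow]
  by_cases hy : y ∈ ball x R
  · rw [huv y hy]
    field_simp
  · rw [mem_ball, dist_eq_norm, not_lt] at hy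
    rw [dpsi_high hφ0]
    · simp
    rw [one_lt_div (by positivity)]
    have : t < ‖y - x‖ := by linarith
    gcongr

theorem fderiv_uv {u v : E4 → F} {x : E4} {R : ℝ}
    (huv : ∀ y ∈ ball x R, v y = u y) {y : E4} (hy : y ∈ ball x R) : fderiv ℝ v y = fderiv ℝ u y := by
  apply Filter.EventuallyEq.fderiv_eq
  filter_upwards [isOpen_ball.mem_nhds hy] with z hz using huv z hz

theorem Dphi_eq {φ : ℝ → ℝ} (hφ0 : ∀ t, (1:ℝ) ≤ t → φ t = 0) {u v : E4 → F} {x : E4} {R : ℝ}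
    (huv : ∀ y ∈ ball x R, v y = u y) {t : ℝ} (ht : 0 < t) (htR : t < R) :
    Dphi φ u x t = DD φ v x t := by
  unfold Dphi DD
  congr 1
  ext y
  rw [phi_eq (φ := φ) (by positivity), div_pow]
  by_cases hy : y ∈ ball x R
  · simp only [gradSq, fderiv_uv huv hy]
  · rw [mem_ball, dist_eq_norm, not_lt] at hy
    rw [psi_zero hφ0 (q_ge ht (by linarith))]
    simp

variable {φ : ℝ → ℝ} {v : E4 → F} {x : E4} {R : ℝ}

theorem cd_dpsi (hφs : ContDiff ℝ (⊤ : ℕ∞) φ) (hφ1 : ∀ t ≤ (3/4 : ℝ), φ t = 1) :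
    ContDiff ℝ (⊤ : ℕ∞) (deriv (psi φ)) := by
  have := (psi_contDiff hφs hφ1)
  exact (contDiff_infty_iff_deriv.1 this).2

theorem cs_normSq (hc : HasCompactSupport v) : HasCompactSupport (fun y => ‖v y‖ ^ 2) := by
  simpa only [real_inner_self_eq_norm_sq] using cs_inner (b := v) hc

theorem intg {ρ : E4 → ℝ} (hρ : Continuous ρ) (hc : HasCompactSupport ρ) (x : E4)
    {h : ℝ → ℝ} (hh : Continuous h) (t : ℝ) : Integrable fun y => ρ y * h (‖y - x‖ ^ 2 / t ^ 2) :=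
  Continuous.integrable_of_hasCompactSupport (by fun_prop) hc.mul_right

theorem HH_deriv0
    (hφs : ContDiff ℝ (⊤ : ℕ∞) φ) (hφ1 : ∀ t ≤ (3/4 : ℝ), φ t = 1)
    (hφ0 : ∀ t, (1:ℝ) ≤ t → φ t = 0) (hv : ContDiff ℝ (⊤ : ℕ∞) v) (hc : HasCompactSupport v)
    {t : ℝ} (ht : 0 < t) :
    HasDerivAt (HH φ v x) (3 * HH φ v x t / t -
      4 / t ^ 2 * ∫ y, ⟪v y, fderiv ℝ v y (y - x)⟫ * deriv (psi φ) (‖y - x‖ ^ 2 / t ^ 2)) t := by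
  have hd : ContDiff ℝ 1 (deriv (psi φ)) := (cd_dpsi hφs hφ1).of_le (by simp)
  have hcv := hv.continuous
  have hce := (cd_eta hv x).continuous
  obtain ⟨M, hM⟩ := bdd_of_supp (f := deriv (deriv (psi φ))) (hd.continuous_deriv le_rfl)
    (fun q hq => by
      have : deriv (psi φ) =ᶠ[nhds q] fun _ => (0:ℝ) := by
        filter_upwards [Iio_mem_nhds hq] with p hp
        have hp' : p < 0 := hp
        exact dpsi_low hφ1 (by linarith)
      rw [this.deriv_eq]; simp)
    (fun q hq => by
      have : deriv (psi φ) =ᶠ[nhds q] fun _ => (0:ℝ) := by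
        filter_upwards [Ioi_mem_nhds hq] with p hp
        exact dpsi_high hφ0 hp
      rw [this.deriv_eq]; simp)
  have h1 := hasDerivAt_param (ρ := fun y => ‖v y‖ ^ 2) (hcv.norm.pow 2)
    (cs_normSq hc) x hd hM ht
  have h2 : HasDerivAt (fun s : ℝ => -(2 / s)) (2 / t ^ 2) t := by
    have := ((hasDerivAt_inv ht.ne').const_mul 2).neg
    refine HasDerivAt.congr_deriv (this.congr_of_eventuallyEq ?_) ?_
    · exact Filter.Eventually.of_forall fun s => by simp [div_eq_mul_inv]
    · field_simp
  refine HasDerivAt.congr_deriv (h2.fun_mul h1) ?_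
  have i2 := ident2 hv hc x hd t
  have e1 : ∫ y, (4 * ‖v y‖ ^ 2 + 2 * ⟪v y, fderiv ℝ v y (y - x)⟫) * deriv (psi φ) (‖y - x‖ ^ 2 / t ^ 2)
      = 4 * (∫ y, ‖v y‖ ^ 2 * deriv (psi φ) (‖y - x‖ ^ 2 / t ^ 2)) +
        2 * ∫ y, ⟪v y, fderiv ℝ v y (y - x)⟫ * deriv (psi φ) (‖y - x‖ ^ 2 / t ^ 2) := by
    rw [← integral_const_mul, ← integral_const_mul, ← integral_add]
    · congr 1; ext y; ring
    · exact (intg (hcv.norm.pow 2) (cs_normSq hc) x hd.continuous t).const_mul _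
    · exact (intg (hcv.inner hce) (cs_inner hc) x hd.continuous t).const_mul _
  have e2 : ∫ y, ‖v y‖ ^ 2 * (deriv (deriv (psi φ)) (‖y - x‖ ^ 2 / t ^ 2) * (-(2 * ‖y - x‖ ^ 2 / t ^ 3)))
      = -(2 / t ^ 3) * ∫ y, (‖v y‖ ^ 2 * ‖y - x‖ ^ 2) * deriv (deriv (psi φ)) (‖y - x‖ ^ 2 / t ^ 2) := by
    rw [← integral_const_mul]
    congr 1; ext y; ring
  have e3 : -(2 / t ^ 3) * ∫ y, (‖v y‖ ^ 2 * ‖y - x‖ ^ 2) * deriv (deriv (psi φ)) (‖y - x‖ ^ 2 / t ^ 2)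
      = t⁻¹ * (-(2 / t ^ 2) * ∫ y, (‖v y‖ ^ 2 * ‖y - x‖ ^ 2) * deriv (deriv (psi φ)) (‖y - x‖ ^ 2 / t ^ 2)) := by
    field_simp
  rw [e2, e3, ← i2, e1]
  unfold HH
  field_simp
  ring

theorem DD_eq
    (hφs : ContDiff ℝ (⊤ : ℕ∞) φ) (hφ1 : ∀ t ≤ (3/4 : ℝ), φ t = 1)
    (hφ0 : ∀ t, (1:ℝ) ≤ t → φ t = 0) (hv : ContDiff ℝ (⊤ : ℕ∞) v) (hc : HasCompactSupport v)
    (hharm : ∀ y ∈ ball x R, ∑ i, fderiv ℝ (fderiv ℝ v) y (ee i) (ee i) = 0)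
    {t : ℝ} (ht : 0 < t) (htR : t ≤ R) :
    DD φ v x t =
      -(2 / t ^ 2) * ∫ y, ⟪v y, fderiv ℝ v y (y - x)⟫ * deriv (psi φ) (‖y - x‖ ^ 2 / t ^ 2) :=
  ident1 hv hc hharm ((psi_contDiff hφs hφ1).of_le (by simp)) (fun q hq => psi_zero hφ0 hq) ht htR

theorem HH_deriv
    (hφs : ContDiff ℝ (⊤ : ℕ∞) φ) (hφ1 : ∀ t ≤ (3/4 : ℝ), φ t = 1)
    (hφ0 : ∀ t, (1:ℝ) ≤ t → φ t = 0) (hv : ContDiff ℝ (⊤ : ℕ∞) v) (hc : HasCompactSupport v)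
    (hharm : ∀ y ∈ ball x R, ∑ i, fderiv ℝ (fderiv ℝ v) y (ee i) (ee i) = 0)
    {t : ℝ} (ht : 0 < t) (htR : t ≤ R) :
    HasDerivAt (HH φ v x) (3 * HH φ v x t / t + 2 * DD φ v x t) t := by
  refine (HH_deriv0 hφs hφ1 hφ0 hv hc ht).congr_deriv ?_
  rw [DD_eq hφs hφ1 hφ0 hv hc hharm ht htR]
  ring

theorem DD_deriv
    (hφs : ContDiff ℝ (⊤ : ℕ∞) φ) (hφ1 : ∀ t ≤ (3/4 : ℝ), φ t = 1)
    (hφ0 : ∀ t, (1:ℝ) ≤ t → φ t = 0) (hv : ContDiff ℝ (⊤ : ℕ∞) v) (hc : HasCompactSupport v)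
    (hharm : ∀ y ∈ ball x R, ∑ i, fderiv ℝ (fderiv ℝ v) y (ee i) (ee i) = 0)
    {t : ℝ} (ht : 0 < t) (htR : t ≤ R) :
    HasDerivAt (DD φ v x) (2 * DD φ v x t / t -
      4 / t ^ 3 * ∫ y, ‖fderiv ℝ v y (y - x)‖ ^ 2 * deriv (psi φ) (‖y - x‖ ^ 2 / t ^ 2)) t := by
  have hd : ContDiff ℝ 1 (psi φ) := (psi_contDiff hφs hφ1).of_le (by simp)
  have hd' : Continuous (deriv (psi φ)) := (cd_dpsi hφs hφ1).continuous
  have hcg := (cd_gradSq hv).continuous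
  have hce := (cd_eta hv x).continuous
  obtain ⟨M, hM⟩ := bdd_of_supp (f := deriv (psi φ)) hd'
    (fun q hq => dpsi_low hφ1 (by linarith)) (fun q hq => dpsi_high hφ0 hq)
  have h1 := hasDerivAt_param hcg (cs_gradSq hc) x hd hM ht
  refine HasDerivAt.congr_deriv h1 ?_
  have i3 := ident3 hv hc hharm hd (fun q hq => psi_zero hφ0 hq) ht htR
  have e0 : ∫ y, (2 * gradSq v y) * psi φ (‖y - x‖ ^ 2 / t ^ 2) = 2 * DD φ v x t := by
    rw [DD, ← integral_const_mul]; congr 1; ext y; ring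
  have e1 : ∫ y, (gradSq v y * ‖y - x‖ ^ 2 - 2 * ‖fderiv ℝ v y (y - x)‖ ^ 2) *
        deriv (psi φ) (‖y - x‖ ^ 2 / t ^ 2) =
      (∫ y, (gradSq v y * ‖y - x‖ ^ 2) * deriv (psi φ) (‖y - x‖ ^ 2 / t ^ 2)) -
      2 * ∫ y, ‖fderiv ℝ v y (y - x)‖ ^ 2 * deriv (psi φ) (‖y - x‖ ^ 2 / t ^ 2) := by
    rw [← integral_const_mul, ← integral_sub]
    · congr 1; ext y; ring
    · exact intg (by fun_prop) (cs_gradSq hc).mul_right x hd' t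
    · exact (intg (hce.norm.pow 2) (cs_normSq (cs_dv hc _)) x hd' t).const_mul _
  have e2 : ∫ y, gradSq v y * (deriv (psi φ) (‖y - x‖ ^ 2 / t ^ 2) * (-(2 * ‖y - x‖ ^ 2 / t ^ 3)))
      = -(2 / t ^ 3) * ∫ y, (gradSq v y * ‖y - x‖ ^ 2) * deriv (psi φ) (‖y - x‖ ^ 2 / t ^ 2) := by
    rw [← integral_const_mul]
    congr 1; ext y; ring
  rw [e2]
  rw [e0, e1] at i3
  have e4 : DD φ v x t = (2 * DD φ v x t) / 2 := by ring
  rw [e4, i3]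
  field_simp
  ring

theorem II_eq
    (hφs : ContDiff ℝ (⊤ : ℕ∞) φ) (hφ1 : ∀ t ≤ (3/4 : ℝ), φ t = 1)
    (hφ0 : ∀ t, (1:ℝ) ≤ t → φ t = 0) (hv : ContDiff ℝ (⊤ : ℕ∞) v) (hc : HasCompactSupport v)
    (hharm : ∀ y ∈ ball x R, ∑ i, fderiv ℝ (fderiv ℝ v) y (ee i) (ee i) = 0)
    {t : ℝ} (ht : 0 < t) (htR : t ≤ R) (hH : 0 < HH φ v x t) :
    II φ v x t = -(∫ y, ‖fderiv ℝ v y (y - x)‖ ^ 2 * deriv (psi φ) (‖y - x‖ ^ 2 / t ^ 2))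
      - t / 2 * (t * DD φ v x t) ^ 2 / HH φ v x t := by
  have hd' : Continuous (deriv (psi φ)) := (cd_dpsi hφs hφ1).continuous
  have hcv := hv.continuous
  have hce := (cd_eta hv x).continuous
  set N := NN φ v x t with hN
  have e1 : II φ v x t =
      -(∫ y, ‖fderiv ℝ v y (y - x)‖ ^ 2 * deriv (psi φ) (‖y - x‖ ^ 2 / t ^ 2))
      + 2 * N * (∫ y, ⟪v y, fderiv ℝ v y (y - x)⟫ * deriv (psi φ) (‖y - x‖ ^ 2 / t ^ 2))
      - N ^ 2 * ∫ y, ‖v y‖ ^ 2 * deriv (psi φ) (‖y - x‖ ^ 2 / t ^ 2) := by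
    rw [← integral_const_mul, ← integral_const_mul, ← integral_neg, ← integral_add, ← integral_sub, II]
    · congr 1; ext y
      rw [norm_sub_sq_real, norm_smul, inner_smul_right, mul_pow, Real.norm_eq_abs, sq_abs, ← hN,
        real_inner_comm]
      ring
    · exact ((intg (hce.norm.pow 2) (cs_normSq (cs_dv hc _)) x hd' t).neg).add
        ((intg (hcv.inner hce) (cs_inner hc) x hd' t).const_mul _)
    · exact (intg (hcv.norm.pow 2) (cs_normSq hc) x hd' t).const_mul _
    · exact (intg (hce.norm.pow 2) (cs_normSq (cs_dv hc _)) x hd' t).neg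
    · exact (intg (hcv.inner hce) (cs_inner hc) x hd' t).const_mul _
  have e2 : (∫ y, ⟪v y, fderiv ℝ v y (y - x)⟫ * deriv (psi φ) (‖y - x‖ ^ 2 / t ^ 2)) =
      -(t ^ 2 / 2) * DD φ v x t := by
    rw [DD_eq hφs hφ1 hφ0 hv hc hharm ht htR]; field_simp
  have e3 : (∫ y, ‖v y‖ ^ 2 * deriv (psi φ) (‖y - x‖ ^ 2 / t ^ 2)) = -(t / 2) * HH φ v x t := by
    rw [HH]; field_simp
  rw [e1, e2, e3, hN, NN]
  field_simp
  ring

theorem NN_deriv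
    (hφs : ContDiff ℝ (⊤ : ℕ∞) φ) (hφ1 : ∀ t ≤ (3/4 : ℝ), φ t = 1)
    (hφ0 : ∀ t, (1:ℝ) ≤ t → φ t = 0) (hv : ContDiff ℝ (⊤ : ℕ∞) v) (hc : HasCompactSupport v)
    (hharm : ∀ y ∈ ball x R, ∑ i, fderiv ℝ (fderiv ℝ v) y (ee i) (ee i) = 0)
    {t : ℝ} (ht : 0 < t) (htR : t ≤ R) (hH : 0 < HH φ v x t) :
    HasDerivAt (NN φ v x) (4 / (t ^ 2 * HH φ v x t) * II φ v x t) t := by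
  have h1 := DD_deriv hφs hφ1 hφ0 hv hc hharm ht htR
  have h2 := HH_deriv hφs hφ1 hφ0 hv hc hharm ht htR
  have h3 := ((hasDerivAt_id t).fun_mul h1).fun_div h2 hH.ne'
  refine HasDerivAt.congr_deriv h3 ?_
  rw [II_eq hφs hφ1 hφ0 hv hc hharm ht htR hH]
  simp only [id]
  field_simp
  ring

end freq

section main
variable {F : Type*} [NormedAddCommGroup F] [InnerProductSpace ℝ F]
  {φ : ℝ → ℝ} {v : E4 → F} {x : E4} {R : ℝ}

theorem psi_nonneg (hφa : Antitone φ) (hφ0 : ∀ t, (1:ℝ) ≤ t → φ t = 0) (q : ℝ) : 0 ≤ psi φ q := by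
  have := psi_antitone hφa (le_max_left q 1)
  rwa [psi_zero hφ0 (le_max_right q 1)] at this

theorem DD_nonneg (hφa : Antitone φ) (hφ0 : ∀ t, (1:ℝ) ≤ t → φ t = 0) (v : E4 → F) (x : E4) (t : ℝ) :
    0 ≤ DD φ v x t := by
  apply integral_nonneg
  intro y
  apply mul_nonneg _ (psi_nonneg hφa hφ0 _)
  unfold gradSq; positivity

theorem II_nonneg (hφa : Antitone φ) (v : E4 → F) (x : E4) (t : ℝ) : 0 ≤ II φ v x t := by
  apply integral_nonneg
  intro y
  apply mul_nonneg (by positivity)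
  linarith [dpsi_nonpos hφa (‖y - x‖ ^ 2 / t ^ 2)]

theorem NN_mono
    (hφs : ContDiff ℝ (⊤ : ℕ∞) φ) (hφa : Antitone φ) (hφ1 : ∀ t ≤ (3/4 : ℝ), φ t = 1)
    (hφ0 : ∀ t, (1:ℝ) ≤ t → φ t = 0) (hv : ContDiff ℝ (⊤ : ℕ∞) v) (hc : HasCompactSupport v)
    (hharm : ∀ y ∈ ball x R, ∑ i, fderiv ℝ (fderiv ℝ v) y (ee i) (ee i) = 0)
    {a b : ℝ} (ha : 0 < a) (hb : b ≤ R) (hH : ∀ t ∈ Set.Icc a b, 0 < HH φ v x t) :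
    MonotoneOn (NN φ v x) (Set.Icc a b) := by
  have hd : ∀ t ∈ Set.Icc a b, HasDerivAt (NN φ v x) (4 / (t ^ 2 * HH φ v x t) * II φ v x t) t :=
    fun t ht => NN_deriv hφs hφ1 hφ0 hv hc hharm (ha.trans_le ht.1) (ht.2.trans hb) (hH t ht)
  apply monotoneOn_of_deriv_nonneg (convex_Icc a b)
  · exact fun t ht => (hd t ht).continuousAt.continuousWithinAt
  · exact fun t ht => (hd t (interior_subset ht)).differentiableAt.differentiableWithinAt
  · intro t ht
    rw [(hd t (interior_subset ht)).deriv]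
    have h1 := hH t (interior_subset ht)
    have h2 := II_nonneg hφa v x t
    positivity

theorem HH_mono
    (hφs : ContDiff ℝ (⊤ : ℕ∞) φ) (hφa : Antitone φ) (hφ1 : ∀ t ≤ (3/4 : ℝ), φ t = 1)
    (hφ0 : ∀ t, (1:ℝ) ≤ t → φ t = 0) (hv : ContDiff ℝ (⊤ : ℕ∞) v) (hc : HasCompactSupport v)
    (hharm : ∀ y ∈ ball x R, ∑ i, fderiv ℝ (fderiv ℝ v) y (ee i) (ee i) = 0)
    {a b : ℝ} (ha : 0 < a) (hb : b ≤ R) (hH : ∀ t ∈ Set.Icc a b, 0 < HH φ v x t) :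
    MonotoneOn (HH φ v x) (Set.Icc a b) := by
  have hd : ∀ t ∈ Set.Icc a b, HasDerivAt (HH φ v x) (3 * HH φ v x t / t + 2 * DD φ v x t) t :=
    fun t ht => HH_deriv hφs hφ1 hφ0 hv hc hharm (ha.trans_le ht.1) (ht.2.trans hb)
  apply monotoneOn_of_deriv_nonneg (convex_Icc a b)
  · exact fun t ht => (hd t ht).continuousAt.continuousWithinAt
  · exact fun t ht => (hd t (interior_subset ht)).differentiableAt.differentiableWithinAt
  · intro t ht
    rw [(hd t (interior_subset ht)).deriv]
    have h1 := hH t (interior_subset ht)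
    have h2 := DD_nonneg hφa hφ0 v x t
    have h3 : 0 < t := ha.trans_le (interior_subset ht).1
    positivity

theorem HH_growth
    (hφs : ContDiff ℝ (⊤ : ℕ∞) φ) (hφa : Antitone φ) (hφ1 : ∀ t ≤ (3/4 : ℝ), φ t = 1)
    (hφ0 : ∀ t, (1:ℝ) ≤ t → φ t = 0) (hv : ContDiff ℝ (⊤ : ℕ∞) v) (hc : HasCompactSupport v)
    (hharm : ∀ y ∈ ball x R, ∑ i, fderiv ℝ (fderiv ℝ v) y (ee i) (ee i) = 0)
    {r Λ : ℝ} (hr : 0 < r) (hb : 4 * r ≤ R)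
    (hH : ∀ t ∈ Set.Icc r (4 * r), 0 < HH φ v x t ∧ NN φ v x t ≤ Λ) :
    HH φ v x (4 * r) ≤ 4 ^ (3 + 2 * Λ) * HH φ v x r := by
  set k := 3 + 2 * Λ with hk
  have hd : ∀ t ∈ Set.Icc r (4 * r), HasDerivAt (fun t => t ^ (-k) * HH φ v x t)
      ((-k) * t ^ (-k - 1) * HH φ v x t + t ^ (-k) * (3 * HH φ v x t / t + 2 * DD φ v x t)) t := by
    intro t ht
    have ht0 : 0 < t := hr.trans_le ht.1
    exact (Real.hasDerivAt_rpow_const (Or.inl ht0.ne')).mul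
      (HH_deriv hφs hφ1 hφ0 hv hc hharm ht0 (ht.2.trans hb))
  have anti : AntitoneOn (fun t => t ^ (-k) * HH φ v x t) (Set.Icc r (4 * r)) := by
    apply antitoneOn_of_deriv_nonpos (convex_Icc _ _)
    · exact fun t ht => (hd t ht).continuousAt.continuousWithinAt
    · exact fun t ht => (hd t (interior_subset ht)).differentiableAt.differentiableWithinAt
    · intro t ht
      rw [(hd t (interior_subset ht)).deriv]
      obtain ⟨h1, h2⟩ := hH t (interior_subset ht)
      have h3 : 0 < t := hr.trans_le (interior_subset ht).1
      have h4 : DD φ v x t = NN φ v x t * HH φ v x t / t := by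
        rw [NN]; field_simp
      rw [Real.rpow_sub_one h3.ne', h4]
      have h5 : (0:ℝ) < t ^ (-k) := Real.rpow_pos_of_pos h3 _
      have h6 : -k * (t ^ (-k) / t) * HH φ v x t + t ^ (-k) * (3 * HH φ v x t / t +
        2 * (NN φ v x t * HH φ v x t / t)) = -(t ^ (-k) * HH φ v x t / t * (k - 3 - 2 * NN φ v x t)) := by
        ring
      rw [h6]
      have h7 : 0 ≤ k - 3 - 2 * NN φ v x t := by rw [hk]; linarith
      have : 0 ≤ t ^ (-k) * HH φ v x t / t * (k - 3 - 2 * NN φ v x t) := by positivity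
      linarith
  have h := anti (Set.left_mem_Icc.2 (by linarith)) (Set.right_mem_Icc.2 (by linarith)) (by linarith : r ≤ 4 * r)
  simp only at h
  rw [Real.mul_rpow (by norm_num) hr.le, Real.rpow_neg (by norm_num : (0:ℝ) ≤ 4), Real.rpow_neg hr.le] at h
  have p1 : (0:ℝ) < 4 ^ k := Real.rpow_pos_of_pos (by norm_num) _
  have p2 : (0:ℝ) < r ^ k := Real.rpow_pos_of_pos hr _
  have h8 : ((4:ℝ) ^ k)⁻¹ * (r ^ k)⁻¹ * HH φ v x (4 * r) = (r ^ k)⁻¹ * (HH φ v x (4 * r) / 4 ^ k) := by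
    field_simp
  rw [h8] at h
  have h9 := le_of_mul_le_mul_left h (by positivity)
  rw [div_le_iff₀ p1] at h9
  linarith

/-- the radial weights integrate to one -/
theorem weight_int
    (hφs : ContDiff ℝ (⊤ : ℕ∞) φ) (hφa : Antitone φ) (hφ1 : ∀ t ≤ (3/4 : ℝ), φ t = 1)
    (hφ0 : ∀ t, (1:ℝ) ≤ t → φ t = 0) (hv : ContDiff ℝ (⊤ : ℕ∞) v) (hc : HasCompactSupport v)
    (hharm : ∀ y ∈ ball x R, ∑ i, fderiv ℝ (fderiv ℝ v) y (ee i) (ee i) = 0)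
    {r : ℝ} (hr : 0 < r) {y : E4} (h1 : r / 3 ≤ ‖y - x‖) (h2 : ‖y - x‖ ≤ 3 * r) :
    ∫ t in Set.Icc (r/4) (4*r), -deriv (psi φ) (‖y - x‖ ^ 2 / t ^ 2) * (2 * ‖y - x‖ ^ 2 / t ^ 3) = 1 := by
  have hd : ContDiff ℝ 1 (psi φ) := (psi_contDiff hφs hφ1).of_le (by simp)
  have hd' : Continuous (deriv (psi φ)) := (cd_dpsi hφs hφ1).continuous
  have hle : r / 4 ≤ 4 * r := by linarith
  rw [integral_Icc_eq_integral_Ioc, ← intervalIntegral.integral_of_le hle]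
  rw [intervalIntegral.integral_eq_sub_of_hasDerivAt (f := fun t => psi φ (‖y - x‖ ^ 2 / t ^ 2))]
  · rw [psi_one hφ1, psi_zero hφ0]
    · norm_num
    · apply q_ge (by positivity); linarith
    · rw [div_le_iff₀ (by positivity)]
      have : ‖y - x‖ ^ 2 ≤ (3 * r) ^ 2 := by gcongr
      linarith
  · intro t ht
    rw [Set.uIcc_of_le hle] at ht
    have ht0 : 0 < t := by have := ht.1; linarith
    have h2 : HasDerivAt (psi φ) (deriv (psi φ) (‖y - x‖ ^ 2 / t ^ 2)) (‖y - x‖ ^ 2 / t ^ 2) :=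
      (hd.differentiable (by simp) _).hasDerivAt
    refine (h2.comp t (hasDerivAt_q y x ht0)).congr_deriv ?_
    ring
  · apply ContinuousOn.intervalIntegrable
    rw [Set.uIcc_of_le hle]
    have hne : ∀ t ∈ Set.Icc (r/4) (4*r), t ≠ 0 := fun t ht => by have := ht.1; intro h; linarith
    apply ContinuousOn.mul
    · apply ContinuousOn.neg
      apply hd'.comp_continuousOn
      exact continuousOn_const.div (continuousOn_id.pow 2) fun t ht => pow_ne_zero _ (hne t ht)
    · exact continuousOn_const.div (continuousOn_id.pow 3) fun t ht => pow_ne_zero _ (hne t ht)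

end main

theorem main_v {F : Type*} [NormedAddCommGroup F] [InnerProductSpace ℝ F]
    {φ : ℝ → ℝ} (hφs : ContDiff ℝ (⊤ : ℕ∞) φ) (hφa : Antitone φ)
    (hφ1 : ∀ t ≤ (3/4 : ℝ), φ t = 1) (hφ0 : ∀ t, (1:ℝ) ≤ t → φ t = 0)
    {v : E4 → F} {x : E4} {R : ℝ}
    (hv : ContDiff ℝ (⊤ : ℕ∞) v) (hc : HasCompactSupport v)
    (hharm : ∀ y ∈ ball x R, ∑ i, fderiv ℝ (fderiv ℝ v) y (ee i) (ee i) = 0)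
    {Λ r : ℝ} (hΛ : 0 < Λ) (hr : 0 < r) (hR : 4 * r ≤ R)
    (hH : ∀ t ∈ Set.Ioc (0:ℝ) (4 * r), 0 < HH φ v x t ∧ NN φ v x t ≤ Λ) :
    (∫ y in ball x (3 * r) \ ball x (r / 3),
          ‖fderiv ℝ v y (y - x) - (NN φ v x ‖y - x‖) • v y‖ ^ 2)
        ≤ (4 ^ (3 + 2 * Λ) * (36 + 1080 * Λ)) * r * HH φ v x r *
          (NN φ v x (4 * r) - NN φ v x (r / 4)) := by
  have hle : r / 4 ≤ 4 * r := by linarith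
  have ha : 0 < r / 4 := by linarith
  have hHI : ∀ t ∈ Set.Icc (r/4) (4 * r), 0 < HH φ v x t := fun t ht => (hH t ⟨ha.trans_le ht.1, ht.2⟩).1
  have hpos : ∀ t ∈ Set.Icc (r/4) (4 * r), 0 < t := fun t ht => ha.trans_le ht.1
  have mN := NN_mono hφs hφa hφ1 hφ0 hv hc hharm ha hR hHI
  have mH := HH_mono hφs hφa hφ1 hφ0 hv hc hharm ha hR hHI
  have gH := HH_growth hφs hφa hφ1 hφ0 hv hc hharm hr hR (Λ := Λ)
    (fun t ht => hH t ⟨hr.trans_le ht.1, ht.2⟩)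
  have memA : r / 4 ∈ Set.Icc (r/4) (4 * r) := Set.left_mem_Icc.2 hle
  have memB : 4 * r ∈ Set.Icc (r/4) (4 * r) := Set.right_mem_Icc.2 hle
  have dN : ∀ t ∈ Set.Icc (r/4) (4 * r), HasDerivAt (NN φ v x) (4 / (t ^ 2 * HH φ v x t) * II φ v x t) t :=
    fun t ht => NN_deriv hφs hφ1 hφ0 hv hc hharm (hpos t ht) (ht.2.trans hR) (hHI t ht)
  have cN : ContinuousOn (NN φ v x) (Set.Icc (r/4) (4 * r)) :=
    fun t ht => (dN t ht).continuousAt.continuousWithinAt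
  have N0 : 0 ≤ NN φ v x (r/4) := by
    have h1 := hHI _ memA
    have h2 := DD_nonneg hφa hφ0 v x (r/4)
    unfold NN; positivity
  set W := NN φ v x (4 * r) - NN φ v x (r / 4) with hW
  have W0 : 0 ≤ W := sub_nonneg.2 (mN memA memB hle)
  have WΛ : W ≤ Λ := by
    have := (hH (4 * r) ⟨by linarith, le_rfl⟩).2
    linarith
  have hd' : Continuous (deriv (psi φ)) := (cd_dpsi hφs hφ1).continuous
  have hcv := hv.continuous
  have hce := (cd_eta hv x).continuous
  set K := closedBall x (4 * r) with hK
  set A := ball x (3 * r) \ ball x (r / 3) with hA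
  have mA : MeasurableSet A := measurableSet_ball.diff measurableSet_ball
  have AK : A ⊆ K := fun y hy => by
    have := hy.1
    rw [mem_ball] at this
    rw [hK, mem_closedBall]; linarith
  set G : ℝ → E4 → ℝ := fun t y =>
    (2 * ‖fderiv ℝ v y (y - x) - NN φ v x t • v y‖ ^ 2 + 2 * (Λ * W) * ‖v y‖ ^ 2) *
      (-deriv (psi φ) (‖y - x‖ ^ 2 / t ^ 2)) * (18 * r ^ 2 / t ^ 3) with hG
  have G0 : ∀ t, 0 < t → ∀ y, 0 ≤ G t y := by
    intro t ht y
    have := dpsi_nonpos hφa (‖y - x‖ ^ 2 / t ^ 2)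
    have h2 : 0 ≤ -deriv (psi φ) (‖y - x‖ ^ 2 / t ^ 2) := by linarith
    simp only [hG]
    positivity
  have contG : ContinuousOn (Function.uncurry G) (Set.Icc (r/4) (4*r) ×ˢ K) := by
    have c1 : ContinuousOn (fun p : ℝ × E4 => NN φ v x p.1) (Set.Icc (r/4) (4*r) ×ˢ K) :=
      cN.comp continuousOn_fst fun p hp => hp.1
    have c2 : ContinuousOn (fun p : ℝ × E4 => ‖p.2 - x‖ ^ 2 / p.1 ^ 2) (Set.Icc (r/4) (4*r) ×ˢ K) :=
      ContinuousOn.div (by fun_prop) (by fun_prop) fun p hp => pow_ne_zero _ (hpos _ hp.1).ne'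
    have c3 : ContinuousOn (fun p : ℝ × E4 => 18 * r ^ 2 / p.1 ^ 3) (Set.Icc (r/4) (4*r) ×ˢ K) :=
      ContinuousOn.div (by fun_prop) (by fun_prop) fun p hp => pow_ne_zero _ (hpos _ hp.1).ne'
    have c4 : Continuous (fun p : ℝ × E4 => fderiv ℝ v p.2 (p.2 - x)) := hce.comp continuous_snd
    have c5 : Continuous (fun p : ℝ × E4 => v p.2) := hcv.comp continuous_snd
    have c6 := hd'.comp_continuousOn c2
    exact ((((((c4.continuousOn.sub (c1.smul c5.continuousOn)).norm).pow 2).const_mul 2).add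
      ((c5.norm.pow 2).continuousOn.const_mul (2 * (Λ * W)))).mul c6.neg).mul c3
  have intG : Integrable (Function.uncurry G)
      ((volume.restrict (Set.Icc (r/4) (4*r))).prod (volume.restrict K)) := by
    rw [Measure.prod_restrict]
    exact contG.integrableOn_compact (isCompact_Icc.prod (isCompact_closedBall x (4*r)))
  -- pointwise bound
  have pw : ∀ y ∈ A, ‖fderiv ℝ v y (y - x) - (NN φ v x ‖y - x‖) • v y‖ ^ 2 ≤
      ∫ t in Set.Icc (r/4) (4*r), G t y := by
    intro y hy
    have y1 : ‖y - x‖ < 3 * r := by simpa [dist_eq_norm] using hy.1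
    have y2 : r / 3 ≤ ‖y - x‖ := by simpa [dist_eq_norm] using hy.2
    have hs : ‖y - x‖ ∈ Set.Icc (r/4) (4*r) := ⟨by linarith, by linarith⟩
    have hw := weight_int hφs hφa hφ1 hφ0 hv hc hharm hr y2 y1.le
    conv_lhs => rw [← mul_one (‖_‖ ^ 2), ← hw, ← integral_const_mul]
    apply setIntegral_mono_on
    · apply ContinuousOn.integrableOn_compact isCompact_Icc
      apply ContinuousOn.mul continuousOn_const
      have hne : ∀ t ∈ Set.Icc (r/4) (4*r), t ≠ 0 := fun t ht => (hpos t ht).ne'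
      apply ContinuousOn.mul
      · apply ContinuousOn.neg
        apply hd'.comp_continuousOn
        exact continuousOn_const.div (continuousOn_id.pow 2) fun t ht => pow_ne_zero _ (hne t ht)
      · exact continuousOn_const.div (continuousOn_id.pow 3) fun t ht => pow_ne_zero _ (hne t ht)
    · apply ContinuousOn.integrableOn_compact isCompact_Icc
      exact contG.comp (f := fun t => (t, y)) (by fun_prop) fun t ht => ⟨ht, AK hy⟩
    · exact measurableSet_Icc
    · intro t ht
      have ht0 := hpos t ht
      have h0 : 0 ≤ -deriv (psi φ) (‖y - x‖ ^ 2 / t ^ 2) := by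
        linarith [dpsi_nonpos hφa (‖y - x‖ ^ 2 / t ^ 2)]
      have hdiff : (NN φ v x t - NN φ v x ‖y - x‖) ^ 2 ≤ Λ * W := by
        have b1 := mN memA ht ht.1
        have b2 := mN ht memB ht.2
        have b3 := mN memA hs hs.1
        have b4 := mN hs memB hs.2
        have : |NN φ v x t - NN φ v x ‖y - x‖| ≤ W := by
          rw [abs_le]; constructor <;> linarith
        calc _ = |NN φ v x t - NN φ v x ‖y - x‖| ^ 2 := (sq_abs _).symm
          _ ≤ W ^ 2 := by gcongr
          _ ≤ Λ * W := by rw [pow_two]; gcongr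
      have hsplit : ‖fderiv ℝ v y (y - x) - (NN φ v x ‖y - x‖) • v y‖ ^ 2 ≤
          2 * ‖fderiv ℝ v y (y - x) - NN φ v x t • v y‖ ^ 2 + 2 * (Λ * W) * ‖v y‖ ^ 2 := by
        have e : fderiv ℝ v y (y - x) - (NN φ v x ‖y - x‖) • v y =
            (fderiv ℝ v y (y - x) - NN φ v x t • v y) + (NN φ v x t - NN φ v x ‖y - x‖) • v y := by
          rw [sub_smul]; abel
        have e2 : ‖(NN φ v x t - NN φ v x ‖y - x‖) • v y‖ ^ 2 ≤ (Λ * W) * ‖v y‖ ^ 2 := by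
          rw [norm_smul, mul_pow, Real.norm_eq_abs, sq_abs]
          gcongr
        rw [e]
        have e3 := norm_add_le (fderiv ℝ v y (y - x) - NN φ v x t • v y)
          ((NN φ v x t - NN φ v x ‖y - x‖) • v y)
        have e4 := pow_le_pow_left₀ (norm_nonneg _) e3 2
        have e5 := add_sq_le (a := ‖fderiv ℝ v y (y - x) - NN φ v x t • v y‖)
          (b := ‖(NN φ v x t - NN φ v x ‖y - x‖) • v y‖)
        linarith
      simp only [hG]
      rw [mul_assoc]
      have hq : 2 * ‖y - x‖ ^ 2 / t ^ 3 ≤ 18 * r ^ 2 / t ^ 3 := by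
        apply div_le_div_of_nonneg_right _ (by positivity)
        have : ‖y - x‖ ^ 2 ≤ (3 * r) ^ 2 := by gcongr
        linarith
      gcongr
  -- inner integral
  have inner_int : ∀ t ∈ Set.Icc (r/4) (4*r), ∫ y in K, G t y =
      9 * r ^ 2 / t * HH φ v x t * (4 / (t ^ 2 * HH φ v x t) * II φ v x t) +
        18 * r ^ 2 * (Λ * W) * HH φ v x t / t ^ 2 := by
    intro t ht
    have ht0 := hpos t ht
    have hHt := hHI t ht
    rw [setIntegral_eq_integral_of_forall_compl_eq_zero]
    · have e3 : (∫ y, ‖v y‖ ^ 2 * deriv (psi φ) (‖y - x‖ ^ 2 / t ^ 2)) = -(t / 2) * HH φ v x t := by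
        rw [HH]; field_simp
      have e4 : ∫ y, G t y = (36 * r ^ 2 / t ^ 3) * II φ v x t -
          (36 * r ^ 2 / t ^ 3 * (Λ * W)) * (∫ y, ‖v y‖ ^ 2 * deriv (psi φ) (‖y - x‖ ^ 2 / t ^ 2)) := by
        rw [II, ← integral_const_mul, ← integral_const_mul, ← integral_sub]
        · congr 1; ext y; simp only [hG]; ring
        · apply Integrable.const_mul
          have hcs : HasCompactSupport fun y => fderiv ℝ v y (y - x) - NN φ v x t • v y :=
            (cs_dv hc _).sub hc.smul_left
          exact intg (ρ := fun y => ‖fderiv ℝ v y (y - x) - NN φ v x t • v y‖ ^ 2)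
            ((hce.sub (hcv.const_smul _)).norm.pow 2) (cs_normSq hcs) x (h := fun q => -deriv (psi φ) q)
            hd'.neg t
        · exact (intg (hcv.norm.pow 2) (cs_normSq hc) x hd' t).const_mul _
      rw [e4, e3]
      field_simp
      ring
    · intro y hy
      rw [hK, mem_closedBall, dist_eq_norm, not_le] at hy
      have : deriv (psi φ) (‖y - x‖ ^ 2 / t ^ 2) = 0 := by
        apply dpsi_high hφ0
        rw [one_lt_div (by positivity)]
        have : t < ‖y - x‖ := by linarith [ht.2]
        gcongr
      simp [hG, this]
  have N'0 : ∀ t ∈ Set.Icc (r/4) (4*r), 0 ≤ 4 / (t ^ 2 * HH φ v x t) * II φ v x t := by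
    intro t ht
    have h1 := hHI t ht
    have h2 := II_nonneg hφa v x t
    positivity
  have intN' : IntervalIntegrable (fun t => 4 / (t ^ 2 * HH φ v x t) * II φ v x t) volume (r/4) (4*r) := by
    apply intervalIntegral.intervalIntegrable_deriv_of_nonneg (g := NN φ v x)
    · rwa [Set.uIcc_of_le hle]
    · rw [min_eq_left hle, max_eq_right hle]
      exact fun t ht => dN t (Set.Ioo_subset_Icc_self ht)
    · rw [min_eq_left hle, max_eq_right hle]
      exact fun t ht => N'0 t (Set.Ioo_subset_Icc_self ht)
  have ftc : ∫ t in (r/4)..(4*r), 4 / (t ^ 2 * HH φ v x t) * II φ v x t = W := by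
    apply intervalIntegral.integral_eq_sub_of_hasDerivAt _ intN'
    rw [Set.uIcc_of_le hle]; exact dN
  have HB := hHI _ memB
  have ineq : ∀ t ∈ Set.Icc (r/4) (4*r), ∫ y in K, G t y ≤
      36 * r * HH φ v x (4 * r) * (4 / (t ^ 2 * HH φ v x t) * II φ v x t) +
        288 * (Λ * W) * HH φ v x (4 * r) := by
    intro t ht
    rw [inner_int t ht]
    have ht0 := hpos t ht
    have hHt := hHI t ht
    have hHb := mH ht memB ht.2
    have h1 := N'0 t ht
    have q1 : 9 * r ^ 2 / t ≤ 36 * r := by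
      rw [div_le_iff₀ ht0]
      nlinarith [ht.1]
    have q2 : 18 * r ^ 2 * (Λ * W) * HH φ v x t / t ^ 2 ≤ 288 * (Λ * W) * HH φ v x (4 * r) := by
      rw [div_le_iff₀ (by positivity)]
      have q3 : 18 * r ^ 2 ≤ 288 * t ^ 2 := by nlinarith [ht.1]
      calc 18 * r ^ 2 * (Λ * W) * HH φ v x t ≤ 288 * t ^ 2 * (Λ * W) * HH φ v x (4 * r) := by gcongr
        _ = _ := by ring
    gcongr
  calc _ ≤ ∫ y in A, ∫ t in Set.Icc (r/4) (4*r), G t y := by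
        apply integral_mono_of_nonneg
        · exact Filter.Eventually.of_forall fun y => by positivity
        · exact IntegrableOn.mono_set (intG.integral_prod_right) AK
        · exact (ae_restrict_iff' mA).2 (Filter.Eventually.of_forall pw)
    _ ≤ ∫ y in K, ∫ t in Set.Icc (r/4) (4*r), G t y := by
        apply setIntegral_mono_set intG.integral_prod_right
        · refine Filter.Eventually.of_forall fun y => ?_
          exact setIntegral_nonneg measurableSet_Icc fun t ht => G0 t (hpos t ht) y
        · exact AK.eventuallyLE
    _ = ∫ t in Set.Icc (r/4) (4*r), ∫ y in K, G t y := (integral_integral_swap intG).symm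
    _ ≤ ∫ t in Set.Icc (r/4) (4*r), (36 * r * HH φ v x (4 * r) * (4 / (t ^ 2 * HH φ v x t) * II φ v x t) +
        288 * (Λ * W) * HH φ v x (4 * r)) := by
        apply setIntegral_mono_on intG.integral_prod_left _ measurableSet_Icc ineq
        rw [← intervalIntegrable_iff_integrableOn_Icc_of_le hle]
        exact (intN'.const_mul _).add intervalIntegrable_const
    _ = r * HH φ v x (4 * r) * W * (36 + 1080 * Λ) := by
        rw [integral_Icc_eq_integral_Ioc, ← intervalIntegral.integral_of_le hle,
          intervalIntegral.integral_add (intN'.const_mul _) intervalIntegrable_const,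
          intervalIntegral.integral_const_mul, ftc, intervalIntegral.integral_const]
        simp only [smul_eq_mul]
        ring
    _ ≤ r * (4 ^ (3 + 2 * Λ) * HH φ v x r) * W * (36 + 1080 * Λ) := by gcongr
    _ = _ := by ring

theorem exists_cutoff {F : Type*} [NormedAddCommGroup F] [InnerProductSpace ℝ F]
    {u : E4 → F} {Ω : Set E4} (hΩ : IsOpen Ω) (hu : IsHarmonicOn u Ω) {x : E4} {ρ : ℝ} (hρ : 0 < ρ)
    (hb : closedBall x ρ ⊆ Ω) :
    ∃ (v : E4 → F) (R : ℝ), ρ < R ∧ ContDiff ℝ (⊤ : ℕ∞) v ∧ HasCompactSupport v ∧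
      (∀ y ∈ ball x R, v y = u y) ∧
      ∀ y ∈ ball x R, ∑ i, fderiv ℝ (fderiv ℝ v) y (ee i) (ee i) = 0 := by
  obtain ⟨δ, hδ, hsub⟩ := (isCompact_closedBall x ρ).exists_cthickening_subset_open hΩ hb
  rw [cthickening_closedBall hδ.le hρ.le] at hsub
  let χ : ContDiffBump x := ⟨ρ + δ / 2, ρ + δ, by linarith, by linarith⟩
  have huv : ∀ y ∈ ball x (ρ + δ / 2), χ y • u y = u y := by
    intro y hy
    rw [χ.one_of_mem_closedBall (ball_subset_closedBall hy), one_smul]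
  refine ⟨fun y => χ y • u y, ρ + δ / 2, by linarith, ?_, ?_, huv, ?_⟩
  · rw [contDiff_iff_contDiffAt]
    intro y
    by_cases hy : y ∈ Ω
    · exact χ.contDiffAt.smul (hu.1.contDiffAt (hΩ.mem_nhds hy))
    · have hy' : y ∉ tsupport χ := by
        rw [χ.tsupport_eq]
        intro h; apply hy; apply hsub
        rw [add_comm]; exact h
      have : (fun y => χ y • u y) =ᶠ[nhds y] fun _ => 0 := by
        filter_upwards [notMem_tsupport_iff_eventuallyEq.1 hy'] with z hz
        rw [hz]; simp
      exact contDiffAt_const.congr_of_eventuallyEq this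
  · exact χ.hasCompactSupport.smul_right
  · intro y hy
    have hyΩ : y ∈ Ω := by
      apply hsub
      rw [mem_ball] at hy
      rw [mem_closedBall]; linarith
    have h1 := hu.2 y hyΩ
    simp only [iteratedFDeriv_two_apply] at h1
    have h2 : fderiv ℝ (fun y => χ y • u y) =ᶠ[nhds y] fderiv ℝ u := by
      filter_upwards [isOpen_ball.mem_nhds hy] with z hz
      exact fderiv_uv huv hz
    rw [h2.fderiv_eq]
    simpa using h1

/-- Flat-case analogue of Lemma 5.2: the frequency pinching estimate with fixed center.
Here `W_{r/4}^{4r}(x) = N_φ(x,4r) − N_φ(x,r/4)`. -/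
theorem stmt_17 (φ : ℝ → ℝ) (hφs : ContDiff ℝ (⊤ : ℕ∞) φ) (hφa : Antitone φ)
    (hφ1 : ∀ t ≤ (3/4 : ℝ), φ t = 1) (hφ0 : ∀ t, (1:ℝ) ≤ t → φ t = 0)
    (Λ : ℝ) (hΛ : 0 < Λ) :
    ∃ C > (0:ℝ),
      ∀ (F : Type) [NormedAddCommGroup F] [InnerProductSpace ℝ F] [FiniteDimensional ℝ F],
      ∀ (u : E4 → F) (Ω : Set E4), IsOpen Ω → IsHarmonicOn u Ω →
      ∀ (x : E4) (r : ℝ), 0 < r → closedBall x (4 * r) ⊆ Ω →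
      (∀ t ∈ Set.Ioc (0:ℝ) (4 * r), 0 < Hphi φ u x t ∧ Nphi φ u x t ≤ Λ) →
      (∫ y in ball x (3 * r) \ ball x (r / 3),
          ‖fderiv ℝ u y (y - x) - (Nphi φ u x ‖y - x‖) • u y‖ ^ 2)
        ≤ C * r * Hphi φ u x r * (Nphi φ u x (4 * r) - Nphi φ u x (r / 4)) := by
  refine ⟨4 ^ (3 + 2 * Λ) * (36 + 1080 * Λ), by positivity, ?_⟩
  intro F _ _ _ u Ω hΩ hu x r hr hb hH
  obtain ⟨v, R, hR, hv, hc, huv, hharm⟩ := exists_cutoff hΩ hu (by linarith : 0 < 4 * r) hb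
  have eH : ∀ t ∈ Set.Ioc (0:ℝ) (4 * r), Hphi φ u x t = HH φ v x t := fun t ht =>
    Hphi_eq hφs hφ1 hφ0 huv ht.1 (ht.2.trans_lt hR)
  have eN : ∀ t ∈ Set.Ioc (0:ℝ) (4 * r), Nphi φ u x t = NN φ v x t := fun t ht => by
    rw [Nphi, NN, eH t ht, Dphi_eq hφ0 huv ht.1 (ht.2.trans_lt hR)]
  have key := main_v hφs hφa hφ1 hφ0 hv hc hharm hΛ hr hR.le (fun t ht => by
    rw [← eH t ht, ← eN t ht]; exact hH t ht)
  rw [eH r ⟨hr, by linarith⟩, eN (4 * r) ⟨by linarith, le_rfl⟩, eN (r / 4) ⟨by linarith, by linarith⟩]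
  refine le_trans (le_of_eq ?_) key
  apply setIntegral_congr_fun (measurableSet_ball.diff measurableSet_ball)
  intro y hy
  have y1 : ‖y - x‖ < 3 * r := by simpa [dist_eq_norm] using hy.1
  have y2 : r / 3 ≤ ‖y - x‖ := by simpa [dist_eq_norm] using hy.2
  have hyR : y ∈ ball x R := by rw [mem_ball, dist_eq_norm]; linarith
  simp only
  rw [eN ‖y - x‖ ⟨by linarith, by linarith⟩, huv y hyR, fderiv_uv huv hyR]
end
end

section
/- For every Λ > 0 there exists a constant C > 0, depending only on φ and Λ, with the following property. Let r > 0 and let x₁, x₂ ∈ ℝ⁴ with 0 < |x₁−x₂| ≤ r/4; suppose u is harmonic on an open set containing the closed ball B̄_{x₁}(6r); suppose that for i = 1,2 one has H_φ(x_i,t) > 0 and N_φ(x_i,t) ≤ Λ for all t ∈ (0, 4r]; let x be a point on the segment from x₁ to x₂ with H_φ(x',r) > 0 for all x' on that segment, and let v = (x₂−x₁)/|x₂−x₁|. Then |x₁−x₂| · |∂_v N_φ(x,r)| ≤ C·(√(W_{r/4}^{4r}(x₁)) + √(W_{r/4}^{4r}(x₂))). -/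
open Metric MeasureTheory
open scoped RealInnerProductSpace

noncomputable section

variable {E : Type*} [NormedAddCommGroup E] [InnerProductSpace ℝ E] [FiniteDimensional ℝ E]

section Helpers

/-- The coordinate vectors. -/
abbrev ei (i : Fin 4) : E4 := EuclideanSpace.single i (1:ℝ)

lemma sum_ei (z : E4) : ∑ i, z i • ei i = z := by
  ext j
  simp [ei, Finset.sum_apply, Pi.single_apply]

lemma integ_of {h : E4 → ℝ} (hc : Continuous h) (h0 : ∀ z, 1 ≤ ‖z‖ → h z = 0) :
    Integrable h := by
  apply hc.integrable_of_hasCompactSupport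
  apply HasCompactSupport.intro (isCompact_closedBall (0:E4) 1)
  intro z hz
  apply h0
  simp at hz
  exact hz.le

lemma integ_mul {h ψ : E4 → ℝ} (hc : Continuous h) (hψ : Continuous ψ)
    (h0 : ∀ z, 1 ≤ ‖z‖ → ψ z = 0) : Integrable (fun z => h z * ψ z) :=
  integ_of (hc.mul hψ) (fun z hz => by simp [h0 z hz])

/-- A pair of weights with `∇g = -ψ z`. -/
structure WPair (g ψ : E4 → ℝ) : Prop where
  cg : Continuous g
  cpsi : Continuous ψ
  zg : ∀ z, 1 ≤ ‖z‖ → g z = 0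
  zpsi : ∀ z, 1 ≤ ‖z‖ → ψ z = 0
  hd : ∀ z, HasFDerivAt g ((-(ψ z)) • innerSL ℝ z) z

variable {F : Type*} [NormedAddCommGroup F] [InnerProductSpace ℝ F]

lemma smooth_pd {U : E4 → F} (hU : ContDiff ℝ (⊤ : ℕ∞) U) (v : E4) :
    ContDiff ℝ (⊤ : ℕ∞) (fun z => fderiv ℝ U z v) :=
  (hU.fderiv_right (m := (⊤ : ℕ∞)) (by simp)).clm_apply contDiff_const

/-- Laplacian. -/
def lap (U : E4 → F) (z : E4) : F :=
  ∑ i : Fin 4, fderiv ℝ (fun y => fderiv ℝ U y (ei i)) z (ei i)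

lemma ibp {g ψ : E4 → ℝ} (hw : WPair g ψ) {U V : E4 → F}
    (hU : ContDiff ℝ (⊤ : ℕ∞) U) (hV : ContDiff ℝ (⊤ : ℕ∞) V)
    (hl : ∀ z, ‖z‖ < 1 → lap U z = 0) :
    ∫ z, (∑ i, ⟪fderiv ℝ U z (ei i), fderiv ℝ V z (ei i)⟫) * g z
      = ∫ z, ⟪fderiv ℝ U z z, V z⟫ * ψ z := by
  have hUi : ∀ i, ContDiff ℝ (⊤ : ℕ∞) (fun z => fderiv ℝ U z (ei i)) := fun i => smooth_pd hU _
  have hVi : ∀ i, ContDiff ℝ (⊤ : ℕ∞) (fun z => fderiv ℝ V z (ei i)) := fun i => smooth_pd hV _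
  have hUii : ∀ i, ContDiff ℝ (⊤ : ℕ∞)
      (fun z => fderiv ℝ (fun y => fderiv ℝ U y (ei i)) z (ei i)) := fun i => smooth_pd (hUi i) _
  have hk : ∀ i, ContDiff ℝ (⊤ : ℕ∞) (fun z => ⟪fderiv ℝ U z (ei i), V z⟫) :=
    fun i => (hUi i).inner ℝ hV
  have hkd : ∀ i z, fderiv ℝ (fun z => ⟪fderiv ℝ U z (ei i), V z⟫) z (ei i)
      = ⟪fderiv ℝ U z (ei i), fderiv ℝ V z (ei i)⟫
        + ⟪fderiv ℝ (fun y => fderiv ℝ U y (ei i)) z (ei i), V z⟫ := by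
    intro i z
    rw [fderiv_inner_apply ℝ ((hUi i).differentiable (by simp) z) (hV.differentiable (by simp) z)]
  have hgd : ∀ i z, fderiv ℝ g z (ei i) = -(ψ z) * z i := by
    intro i z
    rw [(hw.hd z).fderiv]
    simp [ei, EuclideanSpace.inner_single_right]
  have hi1 : ∀ i, Integrable (fun z => ⟪fderiv ℝ U z (ei i), fderiv ℝ V z (ei i)⟫ * g z) :=
    fun i => integ_mul ((hUi i).continuous.inner (hVi i).continuous) hw.cg hw.zg
  have hi2 : ∀ i, Integrable
      (fun z => ⟪fderiv ℝ (fun y => fderiv ℝ U y (ei i)) z (ei i), V z⟫ * g z) :=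
    fun i => integ_mul ((hUii i).continuous.inner hV.continuous) hw.cg hw.zg
  have hi3 : ∀ i, Integrable (fun z => (z i * ⟪fderiv ℝ U z (ei i), V z⟫) * ψ z) := by
    intro i
    refine integ_mul (Continuous.mul (by fun_prop) (hk i).continuous) hw.cpsi hw.zpsi
  have key : ∀ i, (∫ z, ⟪fderiv ℝ U z (ei i), fderiv ℝ V z (ei i)⟫ * g z)
      + (∫ z, ⟪fderiv ℝ (fun y => fderiv ℝ U y (ei i)) z (ei i), V z⟫ * g z)
      = ∫ z, (z i * ⟪fderiv ℝ U z (ei i), V z⟫) * ψ z := by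
    intro i
    rw [← integral_add (hi1 i) (hi2 i)]
    have h := integral_mul_fderiv_eq_neg_fderiv_mul_of_integrable (μ := (volume : Measure E4))
      (f := g) (g := fun z => ⟪fderiv ℝ U z (ei i), V z⟫) (v := ei i) ?_ ?_ ?_ ?_ ?_
    · rw [← integral_neg] at h
      convert h using 1
      · congr 1; ext z; rw [hkd]; ring
      · congr 1; ext z; rw [hgd]; ring
    · refine ((hi3 i).neg).congr (Filter.Eventually.of_forall fun z => ?_)
      simp only [hgd, Pi.neg_apply]; ring
    · refine ((hi1 i).add (hi2 i)).congr (Filter.Eventually.of_forall fun z => ?_)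
      simp only [hkd, Pi.add_apply]; ring
    · refine (integ_mul (hk i).continuous hw.cg hw.zg).congr
        (Filter.Eventually.of_forall fun z => ?_)
      simp only; ring
    · intro z _; exact (hw.hd z).differentiableAt
    · intro z _; exact (hk i).differentiable (by simp) z
  have hs := Finset.sum_congr (rfl : (Finset.univ : Finset (Fin 4)) = _) (fun i _ => key i)
  rw [Finset.sum_add_distrib, ← integral_finsetSum _ (fun i _ => hi1 i),
    ← integral_finsetSum _ (fun i _ => hi2 i), ← integral_finsetSum _ (fun i _ => hi3 i)] at hs
  have hz : ∫ z, ∑ i, ⟪fderiv ℝ (fun y => fderiv ℝ U y (ei i)) z (ei i), V z⟫ * g z = 0 := by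
    rw [← integral_zero E4 ℝ]
    congr 1; ext z
    rw [← Finset.sum_mul, ← sum_inner]
    change ⟪lap U z, V z⟫ * g z = 0
    by_cases h : ‖z‖ < 1
    · simp [hl z h]
    · simp [hw.zg z (not_lt.1 h)]
  rw [hz, add_zero] at hs
  simp_rw [Finset.sum_mul]
  rw [hs]
  congr 1; ext z
  rw [← Finset.sum_mul]
  congr 1
  have : fderiv ℝ U z z = ∑ i, z i • fderiv ℝ U z (ei i) := by
    have h := congrArg (fderiv ℝ U z) (sum_ei z)
    rw [← h, map_sum]
    simp
  rw [this, sum_inner]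
  simp [real_inner_smul_left]

lemma deriv_param {k : ℝ × E4 → ℝ} (hk : ContDiff ℝ 1 k) {ψ : E4 → ℝ} (hψ : Continuous ψ)
    (h0 : ∀ z, 1 ≤ ‖z‖ → ψ z = 0) (k' : E4 → ℝ)
    (hk' : ∀ z, HasDerivAt (fun s => k (s, z)) (k' z) 0) :
    HasDerivAt (fun s => ∫ z, k (s, z) * ψ z) (∫ z, k' z * ψ z) 0 := by
  set kd : ℝ × E4 → ℝ := fun p => fderiv ℝ k p (1, 0) with hkd
  have hkdc : Continuous kd := (hk.continuous_fderiv (by simp)).clm_apply continuous_const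
  have hd : ∀ s z, HasDerivAt (fun s => k (s, z)) (kd (s, z)) s := by
    intro s z
    have h1 : HasFDerivAt k (fderiv ℝ k (s, z)) (s, z) :=
      (hk.differentiable (by simp) _).hasFDerivAt
    have h2 : HasDerivAt (fun s : ℝ => (s, z)) ((1 : ℝ), (0 : E4)) s :=
      (hasDerivAt_id s).prodMk (hasDerivAt_const s z)
    exact h1.comp_hasDerivAt s h2
  have hk'' : k' = fun z => kd (0, z) := by
    ext z; exact (hk' z).unique (hd 0 z)
  obtain ⟨B, hB⟩ := ((isCompact_closedBall (0:ℝ) 1).prod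
    (isCompact_closedBall (0:E4) 1)).exists_bound_of_continuousOn hkdc.continuousOn
  rw [hk'']
  refine (hasDerivAt_integral_of_dominated_loc_of_deriv_le (μ := (volume : Measure E4))
    (F := fun s z => k (s, z) * ψ z) (F' := fun s z => kd (s, z) * ψ z)
    (bound := fun z => B * |ψ z|)
    (closedBall_mem_nhds (0:ℝ) one_pos) ?_ ?_ ?_ ?_ ?_ ?_).2
  · refine Filter.Eventually.of_forall fun s => ?_
    exact ((hk.continuous.comp (by fun_prop)).mul hψ).aestronglyMeasurable
  · exact integ_mul (h := fun z => k (0, z)) (hk.continuous.comp (by fun_prop)) hψ h0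
  · exact ((hkdc.comp (by fun_prop)).mul hψ).aestronglyMeasurable
  · refine Filter.Eventually.of_forall fun z s hs => ?_
    by_cases h : 1 ≤ ‖z‖
    · simp [h0 z h]
    · rw [norm_mul, Real.norm_eq_abs (ψ z)]
      refine mul_le_mul_of_nonneg_right (hB (s, z) ⟨hs, ?_⟩) (abs_nonneg _)
      simp; linarith
  · exact integ_mul (h := fun z => B) continuous_const hψ.abs (fun z hz => by simp [h0 z hz])
  · exact Filter.Eventually.of_forall fun z s hs => (hd s z).mul_const _

end Helpers

section Helpers2

lemma two_le_top' : minSmoothness ℝ 2 ≤ ((⊤ : ℕ∞) : WithTop ℕ∞) := by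
  simp only [minSmoothness_of_isRCLikeNormedField]
  exact WithTop.coe_le_coe.2 (le_top : (2 : ℕ∞) ≤ ⊤)

structure IsCut (φ : ℝ → ℝ) : Prop where
  sm : ContDiff ℝ (⊤ : ℕ∞) φ
  anti : Antitone φ
  one : ∀ t ≤ (3/4 : ℝ), φ t = 1
  zero : ∀ t, (1:ℝ) ≤ t → φ t = 0

variable {φ : ℝ → ℝ}

lemma IsCut.nonneg (h : IsCut φ) (t : ℝ) : 0 ≤ φ t := by
  rw [← h.zero (max t 1) (le_max_right _ _)]
  exact h.anti (le_max_left _ _)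

lemma IsCut.le_one (h : IsCut φ) (t : ℝ) : φ t ≤ 1 := by
  rw [← h.one (min t (3/4)) (min_le_right _ _)]
  exact h.anti (min_le_left _ _)

lemma IsCut.dzero_ge (h : IsCut φ) {t : ℝ} (ht : 1 ≤ t) : deriv φ t = 0 := by
  apply IsLocalMin.deriv_eq_zero
  refine Filter.Eventually.of_forall fun s => ?_
  rw [h.zero t ht]; exact h.nonneg s

lemma IsCut.dzero_le (h : IsCut φ) {t : ℝ} (ht : t ≤ 3/4) : deriv φ t = 0 := by
  apply IsLocalMax.deriv_eq_zero
  refine Filter.Eventually.of_forall fun s => ?_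
  change φ s ≤ φ t
  rw [h.one t ht]; exact h.le_one s

def psi0 (φ : ℝ → ℝ) (z : E4) : ℝ := -(deriv φ ‖z‖) * ‖z‖⁻¹

lemma IsCut.psi_nonneg (h : IsCut φ) (z : E4) : 0 ≤ psi0 φ z := by
  have := h.anti.deriv_nonpos (x := ‖z‖)
  unfold psi0
  have : 0 ≤ -deriv φ ‖z‖ := by linarith
  positivity

lemma IsCut.psi_zero_ge (h : IsCut φ) (z : E4) (hz : 1 ≤ ‖z‖) : psi0 φ z = 0 := by
  simp [psi0, h.dzero_ge hz]

lemma IsCut.psi_zero_le (h : IsCut φ) (z : E4) (hz : ‖z‖ ≤ 3/4) : psi0 φ z = 0 := by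
  simp [psi0, h.dzero_le hz]

lemma IsCut.nhds0 (z : E4) (hz : z = 0) : ∀ᶠ y in nhds z, ‖y‖ ≤ 3/4 := by
  subst hz
  filter_upwards [ball_mem_nhds (0:E4) (by norm_num : (0:ℝ) < 3/4)] with y hy
  simp at hy; exact hy.le

lemma IsCut.psi_cont (h : IsCut φ) : Continuous (psi0 φ) := by
  rw [continuous_iff_continuousAt]
  intro z
  by_cases hz : z = 0
  · have : psi0 φ =ᶠ[nhds z] fun _ => 0 := by
      filter_upwards [IsCut.nhds0 z hz] with y hy
      exact h.psi_zero_le y hy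
    exact continuousAt_const.congr this.symm
  · have h1 : Continuous (deriv φ) := h.sm.continuous_deriv (by simp)
    unfold psi0
    refine ContinuousAt.mul ?_ ?_
    · exact (h1.comp continuous_norm).neg.continuousAt
    · exact continuous_norm.continuousAt.inv₀ (by simpa using hz)

lemma IsCut.psi_bdd (h : IsCut φ) : ∃ M > 0, ∀ z, psi0 φ z ≤ M := by
  obtain ⟨B, hB⟩ := (isCompact_closedBall (0:E4) 1).exists_bound_of_continuousOn
    h.psi_cont.continuousOn
  refine ⟨max B 1, by positivity, fun z => ?_⟩
  by_cases hz : 1 ≤ ‖z‖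
  · rw [h.psi_zero_ge z hz]; positivity
  · refine le_trans (le_trans (le_abs_self _) (hB z ?_)) (le_max_left _ _)
    simp; linarith

lemma IsCut.pair (h : IsCut φ) : WPair (fun z => φ ‖z‖) (psi0 φ) where
  cg := h.sm.continuous.comp continuous_norm
  cpsi := h.psi_cont
  zg := fun z hz => h.zero _ hz
  zpsi := h.psi_zero_ge
  hd := by
    intro z
    by_cases hz : z = 0
    · have : (fun z : E4 => φ ‖z‖) =ᶠ[nhds z] fun _ => 1 := by
        filter_upwards [IsCut.nhds0 z hz] with y hy
        exact h.one _ hy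
      have h2 := (hasFDerivAt_const (𝕜 := ℝ) (1:ℝ) z).congr_of_eventuallyEq this
      refine h2.congr_fderiv ?_
      rw [h.psi_zero_le z (by simp [hz]; norm_num)]; simp
    · have h1 : HasDerivAt φ (deriv φ ‖z‖) ‖z‖ :=
        (h.sm.differentiable (by simp) _).hasDerivAt
      have h2 : HasFDerivAt (fun z : E4 => ‖z‖) (‖z‖⁻¹ • innerSL ℝ z) z := by
        have h4 : HasFDerivAt (fun z : E4 => ‖z‖^2) (2 • innerSL ℝ z) z :=
          (hasStrictFDerivAt_norm_sq z).hasFDerivAt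
        have h5 := h4.sqrt (by simpa using hz)
        have h6 : (fun z : E4 => Real.sqrt (‖z‖^2)) = fun z : E4 => ‖z‖ := by
          ext z; exact Real.sqrt_sq (norm_nonneg z)
        rw [h6] at h5
        refine h5.congr_fderiv ?_
        rw [Real.sqrt_sq (norm_nonneg z)]
        ext w; simp; ring
      have h3 := h1.comp_hasFDerivAt z h2
      refine h3.congr_fderiv ?_
      rw [smul_smul]; congr 1; simp [psi0]

def zeta (φ : ℝ → ℝ) (z : E4) : ℝ := (1/2) * ∫ s in (‖z‖^2)..1, φ (Real.sqrt s)

lemma IsCut.zeta_hd (h : IsCut φ) (z : E4) :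
    HasFDerivAt (zeta φ) ((-(φ ‖z‖)) • innerSL ℝ z) z := by
  have hc : Continuous (fun s => φ (Real.sqrt s)) := h.sm.continuous.comp Real.continuous_sqrt
  have h1 : HasDerivAt (fun q => ∫ s in q..1, φ (Real.sqrt s)) (-φ (Real.sqrt (‖z‖^2))) (‖z‖^2) :=
    intervalIntegral.integral_hasDerivAt_left (hc.intervalIntegrable _ _)
      hc.stronglyMeasurable.stronglyMeasurableAtFilter hc.continuousAt
  have h2 : HasFDerivAt (fun z : E4 => ‖z‖^2) (2 • innerSL ℝ z) z := 
    (hasStrictFDerivAt_norm_sq z).hasFDerivAt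
  have h3 := (h1.comp_hasFDerivAt z h2).const_mul (1/2)
  refine h3.congr_fderiv ?_
  rw [Real.sqrt_sq (norm_nonneg z)]
  ext w; simp; ring

lemma IsCut.zeta_nonneg (h : IsCut φ) (z : E4) : 0 ≤ zeta φ z := by
  unfold zeta
  by_cases hz : ‖z‖^2 ≤ 1
  · have := intervalIntegral.integral_nonneg (μ := volume) hz (fun s _ => h.nonneg (Real.sqrt s))
    positivity
  · rw [intervalIntegral.integral_zero_ae]
    · simp
    · refine Filter.Eventually.of_forall fun s hs => h.zero _ ?_
      rw [Set.uIoc_of_ge (by linarith)] at hs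
      exact Real.one_le_sqrt.2 hs.1.le

lemma IsCut.zeta_zero (h : IsCut φ) (z : E4) (hz : 1 ≤ ‖z‖) : zeta φ z = 0 := by
  unfold zeta
  rw [intervalIntegral.integral_zero_ae]
  · simp
  · refine Filter.Eventually.of_forall fun s hs => h.zero _ ?_
    rw [Set.uIoc_of_ge (by nlinarith)] at hs
    exact Real.one_le_sqrt.2 hs.1.le

lemma IsCut.pair2 (h : IsCut φ) : WPair (zeta φ) (fun z => φ ‖z‖) where
  cg := continuous_iff_continuousAt.2 fun z => (h.zeta_hd z).continuousAt
  cpsi := h.sm.continuous.comp continuous_norm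
  zg := h.zeta_zero
  zpsi := fun z hz => h.zero _ hz
  hd := h.zeta_hd

variable {F : Type*} [NormedAddCommGroup F] [InnerProductSpace ℝ F]

/-- The rescaled function. -/
def sc {G : Type*} (u : E4 → G) (x : E4) (t : ℝ) (z : E4) : G := u (x + t • z)

lemma sc_smooth {G : Type*} [NormedAddCommGroup G] [NormedSpace ℝ G] {u : E4 → G} (hu : ContDiff ℝ (⊤ : ℕ∞) u) (x : E4) (t : ℝ) :
    ContDiff ℝ (⊤ : ℕ∞) (sc u x t) := by
  unfold sc; exact hu.comp (by fun_prop)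

lemma sc_fderiv {G : Type*} [NormedAddCommGroup G] [NormedSpace ℝ G] {u : E4 → G} (hu : ContDiff ℝ (⊤ : ℕ∞) u) (x : E4) (t : ℝ) (z w : E4) :
    fderiv ℝ (sc u x t) z w = t • fderiv ℝ u (x + t • z) w := by
  have h1 : HasFDerivAt u (fderiv ℝ u (x + t • z)) (x + t • z) :=
    (hu.differentiable (by simp) _).hasFDerivAt
  have h2 : HasFDerivAt (fun z : E4 => x + t • z) (t • ContinuousLinearMap.id ℝ E4) z :=
    ((hasFDerivAt_id z).const_smul t).const_add x
  have h3 : HasFDerivAt (sc u x t) _ z := h1.comp z h2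
  rw [h3.fderiv]; simp

lemma sc_lap {u : E4 → F} (hu : ContDiff ℝ (⊤ : ℕ∞) u) (x : E4) (t : ℝ) (z : E4) :
    lap (sc u x t) z = t^2 • lap u (x + t • z) := by
  unfold lap
  rw [Finset.smul_sum]
  refine Finset.sum_congr rfl fun i _ => ?_
  have : (fun y => fderiv ℝ (sc u x t) y (ei i)) =
      t • sc (fun y => fderiv ℝ u y (ei i)) x t := by
    ext y; rw [sc_fderiv hu]; rfl
  rw [this, fderiv_const_smul ((sc_smooth (smooth_pd hu _) x t).differentiable (by simp) z)]
  simp only [smul_apply]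
  rw [sc_fderiv (smooth_pd hu _), smul_smul, sq]

/-- weighted inner product -/
def IP (φ : ℝ → ℝ) (A B : E4 → F) : ℝ := ∫ z, ⟪A z, B z⟫ * psi0 φ z

def eu (U : E4 → F) (z : E4) : F := fderiv ℝ U z z

lemma eu_smooth {U : E4 → F} (hU : ContDiff ℝ (⊤ : ℕ∞) U) : ContDiff ℝ (⊤ : ℕ∞) (eu U) :=
  (hU.fderiv_right (m := (⊤ : ℕ∞)) (by simp)).clm_apply contDiff_id

def H0 (φ : ℝ → ℝ) (u : E4 → F) (x : E4) (t : ℝ) : ℝ := IP φ (sc u x t) (sc u x t)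

def D0 (φ : ℝ → ℝ) (u : E4 → F) (x : E4) (t : ℝ) : ℝ :=
  ∫ z, (∑ i, ‖t • fderiv ℝ u (x + t • z) (ei i)‖^2) * φ ‖z‖

lemma D0_eq (h : IsCut φ) {u : E4 → F} (hu : ContDiff ℝ (⊤ : ℕ∞) u) {x : E4} {t : ℝ} (ht : 0 < t)
    (hl : ∀ y ∈ ball x t, lap u y = 0) :
    D0 φ u x t = IP φ (eu (sc u x t)) (sc u x t) := by
  have := ibp h.pair (sc_smooth hu x t) (sc_smooth hu x t) (fun z hz => by
    rw [sc_lap hu, hl _ (by simpa [norm_smul, abs_of_pos ht] using by nlinarith)]; simp)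
  unfold IP eu
  rw [← this, D0]
  congr 1; ext z; congr 1
  refine Finset.sum_congr rfl fun i _ => ?_
  rw [sc_fderiv hu, real_inner_self_eq_norm_sq]

/-- the variation field -/
def vf (u : E4 → F) (x : E4) (t : ℝ) (a : E4) (b : ℝ) (z : E4) : F :=
  fderiv ℝ u (x + t • z) (a + b • z)

lemma vf_smooth {u : E4 → F} (hu : ContDiff ℝ (⊤ : ℕ∞) u) (x : E4) (t : ℝ) (a : E4) (b : ℝ) :
    ContDiff ℝ (⊤ : ℕ∞) (vf u x t a b) := by
  unfold vf
  refine ContDiff.clm_apply ?_ (by fun_prop)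
  exact (hu.fderiv_right (m := (⊤ : ℕ∞)) (by simp)).comp (by fun_prop)

lemma curve_deriv {u : E4 → F} (hu : ContDiff ℝ (⊤ : ℕ∞) u) (x : E4) (t : ℝ) (a : E4) (b : ℝ)
    (z : E4) : HasDerivAt (fun s : ℝ => u (x + s • a + (t + s * b) • z)) (vf u x t a b z) 0 := by
  have h1 : HasFDerivAt u (fderiv ℝ u (x + t • z)) (x + (0:ℝ) • a + (t + 0 * b) • z) := by
    simpa using (hu.differentiable (by simp) (x + t • z)).hasFDerivAt
  have h2 : HasDerivAt (fun s : ℝ => x + s • a + (t + s * b) • z) (a + b • z) 0 := by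
    have h3 := ((hasDerivAt_id (0:ℝ)).smul_const a).const_add x
    have h4 := (((hasDerivAt_id (0:ℝ)).mul_const b).const_add t).smul_const z
    exact (h3.add h4).congr_deriv (by simp)
  exact h1.comp_hasDerivAt (0:ℝ) h2

lemma H0_deriv (h : IsCut φ) {u : E4 → F} (hu : ContDiff ℝ (⊤ : ℕ∞) u) (x : E4) (t : ℝ)
    (a : E4) (b : ℝ) :
    HasDerivAt (fun s : ℝ => H0 φ u (x + s • a) (t + s * b))
      (2 * IP φ (sc u x t) (vf u x t a b)) 0 := by
  have := deriv_param (k := fun p : ℝ × E4 => ⟪u (x + p.1 • a + (t + p.1 * b) • p.2),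
      u (x + p.1 • a + (t + p.1 * b) • p.2)⟫) ?_ h.psi_cont h.psi_zero_ge
      (fun z => 2 * ⟪sc u x t z, vf u x t a b z⟫) ?_
  · refine this.congr_deriv ?_
    unfold IP
    rw [← integral_const_mul]
    congr 1; ext z; ring
  · have : ContDiff ℝ (⊤ : ℕ∞) (fun p : ℝ × E4 => u (x + p.1 • a + (t + p.1 * b) • p.2)) :=
      hu.comp (by fun_prop)
    exact (this.inner ℝ this).of_le (by simp)
  · intro z
    have h1 := curve_deriv hu x t a b z
    have h2 := h1.inner ℝ h1
    refine h2.congr_deriv ?_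
    symm
    simp only [zero_smul, add_zero, zero_mul]
    change 2 * ⟪sc u x t z, vf u x t a b z⟫ = ⟪sc u x t z, vf u x t a b z⟫ + ⟪vf u x t a b z, sc u x t z⟫
    rw [real_inner_comm (sc u x t z)]; ring

lemma pd_symm {u : E4 → F} (hu : ContDiff ℝ (⊤ : ℕ∞) u) (y v w : E4) :
    fderiv ℝ (fun y => fderiv ℝ u y v) y w = fderiv ℝ (fun y => fderiv ℝ u y w) y v := by
  have hd : DifferentiableAt ℝ (fderiv ℝ u) y :=
    (hu.fderiv_right (m := (⊤ : ℕ∞)) (by simp)).differentiable (by simp) y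
  have hs : IsSymmSndFDerivAt ℝ u y := hu.contDiffAt.isSymmSndFDerivAt two_le_top'
  rw [fderiv_clm_apply hd (by fun_prop), fderiv_clm_apply hd (by fun_prop)]
  simpa using hs w v

lemma vf_pd {u : E4 → F} (hu : ContDiff ℝ (⊤ : ℕ∞) u) (x : E4) (t : ℝ) (a : E4) (b : ℝ)
    (z w : E4) : fderiv ℝ (vf u x t a b) z w =
      t • vf (fun y => fderiv ℝ u y w) x t a b z + b • fderiv ℝ u (x + t • z) w := by
  have hf := hu.fderiv_right (m := (⊤ : ℕ∞)) (by simp)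
  have hd : DifferentiableAt ℝ (sc (fderiv ℝ u) x t) z :=
    (sc_smooth hf x t).differentiable (by simp) z
  have : vf u x t a b = fun z => (sc (fderiv ℝ u) x t z) (a + b • z) := rfl
  rw [this, fderiv_clm_apply hd (by fun_prop)]
  simp only [add_apply, ContinuousLinearMap.comp_apply,
    ContinuousLinearMap.flip_apply]
  have e1 : fderiv ℝ (fun z : E4 => a + b • z) z w = b • w := by
    rw [fderiv_const_add, fderiv_fun_const_smul (by fun_prop)]; simp
  rw [sc_fderiv hf, e1, add_comm, map_smul]
  congr 1
  have hd2 : DifferentiableAt ℝ (fderiv ℝ u) (x + t • z) := hf.differentiable (by simp) _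
  have hs : IsSymmSndFDerivAt ℝ u (x + t • z) := hu.contDiffAt.isSymmSndFDerivAt two_le_top'
  simp only [smul_apply, vf]
  rw [fderiv_clm_apply hd2 (by fun_prop)]
  simp only [add_apply, ContinuousLinearMap.comp_apply,
    ContinuousLinearMap.flip_apply]
  rw [hs w (a + b • z)]; simp

lemma D0_deriv (h : IsCut φ) {u : E4 → F} (hu : ContDiff ℝ (⊤ : ℕ∞) u) (x : E4) {t : ℝ}
    (ht : 0 < t) (hl : ∀ y ∈ ball x t, lap u y = 0) (a : E4) (b : ℝ) :
    HasDerivAt (fun s : ℝ => D0 φ u (x + s • a) (t + s * b))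
      (2 * IP φ (eu (sc u x t)) (vf u x t a b)) 0 := by
  have hib := ibp h.pair (sc_smooth hu x t) (vf_smooth hu x t a b) (fun z hz => by
    rw [sc_lap hu, hl _ (by simpa [norm_smul, abs_of_pos ht] using by nlinarith)]; simp)
  have := deriv_param (k := fun p : ℝ × E4 => ∑ i, 
      ‖(t + p.1 * b) • fderiv ℝ u (x + p.1 • a + (t + p.1 * b) • p.2) (ei i)‖^2)
      ?_ h.pair.cg h.pair.zg
      (fun z => 2 * ∑ i, ⟪fderiv ℝ (sc u x t) z (ei i), fderiv ℝ (vf u x t a b) z (ei i)⟫) ?_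
  · refine this.congr_deriv ?_
    unfold IP eu
    rw [← hib, ← integral_const_mul]
    congr 1; ext z; ring
  · refine ContDiff.sum fun i _ => ?_
    have : ContDiff ℝ (⊤ : ℕ∞) (fun p : ℝ × E4 =>
        (t + p.1 * b) • fderiv ℝ u (x + p.1 • a + (t + p.1 * b) • p.2) (ei i)) := by
      refine ContDiff.smul (by fun_prop) ?_
      exact (smooth_pd hu (ei i)).comp 
        (g := fun y => fderiv ℝ u y (ei i))
        (f := fun p : ℝ × E4 => x + p.1 • a + (t + p.1 * b) • p.2) (by fun_prop)
    exact (this.norm_sq ℝ).of_le (by simp)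
  · intro z
    rw [Finset.mul_sum]
    refine HasDerivAt.fun_sum fun i _ => ?_
    have h1 := curve_deriv (smooth_pd hu (ei i)) x t a b z
    have h2 : HasDerivAt (fun s : ℝ => t + s * b) b 0 := by
      simpa using ((hasDerivAt_id (0:ℝ)).mul_const b).const_add t
    have h3 := (h2.smul h1).norm_sq
    refine h3.congr_deriv ?_
    rw [vf_pd hu, sc_fderiv hu]
    simp

end Helpers2

section Helpers3

variable {φ : ℝ → ℝ} {F : Type*} [NormedAddCommGroup F] [InnerProductSpace ℝ F]

lemma IP_integ (h : IsCut φ) {A B : E4 → F} (hA : Continuous A) (hB : Continuous B) :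
    Integrable (fun z => ⟪A z, B z⟫ * psi0 φ z) :=
  integ_mul (hA.inner hB) h.psi_cont h.psi_zero_ge

lemma IP_comm (A B : E4 → F) : IP φ A B = IP φ B A := by
  unfold IP; congr 1; ext z; rw [real_inner_comm]

lemma IP_add (h : IsCut φ) {A B C : E4 → F} (hA : Continuous A) (hB : Continuous B)
    (hC : Continuous C) : IP φ A (fun z => B z + C z) = IP φ A B + IP φ A C := by
  unfold IP
  rw [← integral_add (IP_integ h hA hB) (IP_integ h hA hC)]
  congr 1; ext z; rw [inner_add_right]; ring

lemma IP_smul (c : ℝ) (A B : E4 → F) : IP φ A (fun z => c • B z) = c * IP φ A B := by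
  unfold IP
  rw [← integral_const_mul]
  congr 1; ext z; rw [real_inner_smul_right]; ring

lemma IP_sub (h : IsCut φ) {A B C : E4 → F} (hA : Continuous A) (hB : Continuous B)
    (hC : Continuous C) : IP φ A (fun z => B z - C z) = IP φ A B - IP φ A C := by
  unfold IP
  rw [← integral_sub (IP_integ h hA hB) (IP_integ h hA hC)]
  congr 1; ext z; rw [inner_sub_right]; ring

lemma IP_nonneg (h : IsCut φ) (A : E4 → F) : 0 ≤ IP φ A A :=
  integral_nonneg fun z => mul_nonneg real_inner_self_nonneg (h.psi_nonneg z)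

lemma IP_sub_smul (h : IsCut φ) {A B : E4 → F} (hA : Continuous A) (hB : Continuous B) (c : ℝ) :
    IP φ (fun z => A z - c • B z) (fun z => A z - c • B z)
      = IP φ A A - 2 * c * IP φ A B + c^2 * IP φ B B := by
  have hc : Continuous (fun z => c • B z) := hB.const_smul c
  have hAc : Continuous (fun z => A z - c • B z) := hA.sub hc
  have e1 : IP φ (fun z => A z - c • B z) A = IP φ A A - c * IP φ A B := by
    rw [IP_comm, IP_sub h hA hA hc, IP_smul]
  have e2 : IP φ (fun z => A z - c • B z) B = IP φ A B - c * IP φ B B := by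
    rw [IP_comm, IP_sub h hB hA hc, IP_smul, IP_comm B A]
  rw [IP_sub h hAc hA hc, IP_smul, e1, e2]
  ring

lemma IP_cs (h : IsCut φ) {A B : E4 → F} (hA : Continuous A) (hB : Continuous B) :
    (IP φ A B)^2 ≤ IP φ A A * IP φ B B := by
  have hd : discrim (IP φ B B) (-2 * IP φ A B) (IP φ A A) ≤ 0 := by
    apply discrim_le_zero
    intro c
    have := IP_nonneg h (fun z => A z - c • B z)
    rw [IP_sub_smul h hA hB] at this
    nlinarith
  unfold discrim at hd
  nlinarith

/-- change of variables -/
lemma cov (k : E4 → ℝ) (x : E4) {t : ℝ} (ht : 0 < t) :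
    ∫ z, k (x + t • z) = (t^4)⁻¹ * ∫ y, k y := by
  have h1 := Measure.integral_comp_smul (volume : Measure E4) (fun y => k (x + y)) t
  rw [h1, integral_add_left_eq_self k x]
  simp only [finrank_euclideanSpace, Fintype.card_fin, smul_eq_mul]
  rw [abs_of_pos (by positivity)]

lemma mean_aux (h : IsCut φ) {U : E4 → F} (hU : ContDiff ℝ (⊤ : ℕ∞) U)
    (hl : ∀ z, ‖z‖ < 1 → lap U z = 0) :
    4 * ∫ z, ‖U z‖^2 * φ ‖z‖ ≤ IP φ U U := by
  have hpos : 0 ≤ ∫ z, ⟪fderiv ℝ U z z, U z⟫ * φ ‖z‖ := by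
    rw [← ibp h.pair2 hU hU hl]
    refine integral_nonneg fun z => mul_nonneg (Finset.sum_nonneg fun i _ => ?_) (h.zeta_nonneg z)
    exact real_inner_self_nonneg
  have hn : ContDiff ℝ (⊤ : ℕ∞) (fun z => ‖U z‖^2) := hU.norm_sq ℝ
  have hg : ∀ i : Fin 4, ContDiff ℝ (⊤ : ℕ∞) (fun z : E4 => z i * ‖U z‖^2) := fun i =>
    ContDiff.mul (by fun_prop) hn
  have hgd : ∀ (i : Fin 4) z, fderiv ℝ (fun z : E4 => z i * ‖U z‖^2) z (ei i) =
      ‖U z‖^2 + 2 * ⟪z i • fderiv ℝ U z (ei i), U z⟫ := by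
    intro i z
    have h1 : HasFDerivAt (fun z : E4 => z i) (EuclideanSpace.proj i : E4 →L[ℝ] ℝ) z :=
      (EuclideanSpace.proj i : E4 →L[ℝ] ℝ).hasFDerivAt
    have h2 := (hU.differentiable (by simp) z).hasFDerivAt.norm_sq
    have h3 : HasFDerivAt (fun z : E4 => z i * ‖U z‖^2) _ z := h1.mul h2
    rw [h3.fderiv]
    simp [real_inner_smul_right, real_inner_comm]
    ring
  have hgdc : ∀ i : Fin 4, Continuous fun z => fderiv ℝ (fun z : E4 => z i * ‖U z‖^2) z (ei i) :=
    fun i => (smooth_pd (F := ℝ) (hg i) (ei i)).continuous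
  have hfd : ∀ (i : Fin 4) z, fderiv ℝ (fun z : E4 => φ ‖z‖) z (ei i) = -(psi0 φ z) * z i := by
    intro i z
    rw [(h.pair.hd z).fderiv]
    simp [ei, EuclideanSpace.inner_single_right]
  have key : ∀ i : Fin 4, ∫ z, (‖U z‖^2 + 2 * ⟪z i • fderiv ℝ U z (ei i), U z⟫) * φ ‖z‖
      = ∫ z, ((z i)^2 * ‖U z‖^2) * psi0 φ z := by
    intro i
    have h1 := integral_mul_fderiv_eq_neg_fderiv_mul_of_integrable (μ := (volume : Measure E4))
      (f := fun z : E4 => φ ‖z‖) (g := fun z : E4 => z i * ‖U z‖^2) (v := ei i) ?_ ?_ ?_ ?_ ?_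
    · rw [← integral_neg] at h1
      convert h1 using 1
      · congr 1; ext z; rw [hgd]; ring
      · congr 1; ext z; rw [hfd]; ring
    · refine (integ_mul (h := fun z : E4 => -((z i)^2 * ‖U z‖^2)) ?_ h.psi_cont
        h.psi_zero_ge).congr (Filter.Eventually.of_forall fun z => ?_)
      · exact (Continuous.mul (by fun_prop) hn.continuous).neg
      · simp only [hfd]; ring
    · refine (integ_mul (hgdc i) h.pair.cg h.pair.zg).congr
        (Filter.Eventually.of_forall fun z => ?_)
      simp only; ring
    · refine (integ_mul (hg i).continuous h.pair.cg h.pair.zg).congr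
        (Filter.Eventually.of_forall fun z => ?_)
      simp only; ring
    · intro z _; exact (h.pair.hd z).differentiableAt
    · intro z _; exact (hg i).differentiable (by simp) z
  have hs := Finset.sum_congr (rfl : (Finset.univ : Finset (Fin 4)) = _) (fun i _ => key i)
  have hi1 : ∀ i : Fin 4, Integrable
      (fun z => (‖U z‖^2 + 2 * ⟪z i • fderiv ℝ U z (ei i), U z⟫) * φ ‖z‖) := by
    intro i
    refine (integ_mul (hgdc i) h.pair.cg h.pair.zg).congr
        (Filter.Eventually.of_forall fun z => ?_)
    simp only [hgd]
  have hi2 : ∀ i : Fin 4, Integrable (fun z : E4 => ((z i)^2 * ‖U z‖^2) * psi0 φ z) := by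
    intro i
    exact integ_mul (Continuous.mul (by fun_prop) hn.continuous) h.psi_cont h.psi_zero_ge
  rw [← integral_finsetSum _ (fun i _ => hi1 i), ← integral_finsetSum _ (fun i _ => hi2 i)] at hs
  have e1 : ∀ z : E4, ∑ i, (‖U z‖^2 + 2 * ⟪z i • fderiv ℝ U z (ei i), U z⟫) * φ ‖z‖
      = 4 * (‖U z‖^2 * φ ‖z‖) + 2 * (⟪fderiv ℝ U z z, U z⟫ * φ ‖z‖) := by
    intro z
    have : fderiv ℝ U z z = ∑ i, z i • fderiv ℝ U z (ei i) := by
      have h := congrArg (fderiv ℝ U z) (sum_ei z)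
      rw [← h, map_sum]
      simp
    rw [← Finset.sum_mul, Finset.sum_add_distrib, ← Finset.mul_sum, ← sum_inner, ← this]
    simp; ring
  have e2 : ∀ z : E4, ∑ i, ((z i)^2 * ‖U z‖^2) * psi0 φ z = ‖z‖^2 * ‖U z‖^2 * psi0 φ z := by
    intro z
    rw [← Finset.sum_mul, ← Finset.sum_mul, EuclideanSpace.norm_sq_eq]
    simp
  simp_rw [e1, e2] at hs
  rw [integral_add, integral_const_mul, integral_const_mul] at hs
  · have hle : ∫ z, ‖z‖^2 * ‖U z‖^2 * psi0 φ z ≤ IP φ U U := by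
      unfold IP
      refine integral_mono ?_ (IP_integ h hU.continuous hU.continuous) fun z => ?_
      · exact integ_mul ((continuous_norm.pow 2).mul hn.continuous) h.psi_cont h.psi_zero_ge
      · simp only
        rw [real_inner_self_eq_norm_sq]
        by_cases hz : 1 ≤ ‖z‖
        · simp [h.psi_zero_ge z hz]
        · refine mul_le_mul_of_nonneg_right ?_ (h.psi_nonneg z)
          have : ‖z‖^2 ≤ 1 := by nlinarith [norm_nonneg z]
          nlinarith [sq_nonneg ‖U z‖]
    linarith
  · exact (integ_mul hn.continuous h.pair.cg h.pair.zg).const_mul 4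
  · exact (integ_mul ((eu_smooth hU).continuous.inner hU.continuous) h.pair.cg h.pair.zg).const_mul 2

/-- comparison of heights at different centres -/
lemma H0_comp (h : IsCut φ) {M : ℝ} (hM0 : 0 < M) (hM : ∀ z, psi0 φ z ≤ M) {f : E4 → F}
    (hf : ContDiff ℝ (⊤ : ℕ∞) f) {x x' : E4} {t ρ : ℝ} (ht : 0 < t) (hρ : 0 < ρ) (htρ : t ≤ 4 * ρ)
    (hl : ∀ y ∈ ball x t, lap f y = 0) (hd : dist x' x + ρ ≤ 3 / 4 * t) :
    H0 φ f x' ρ ≤ 64 * M * H0 φ f x t := by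
  have h1 := mean_aux h (sc_smooth hf x t) (fun z hz => by
    rw [sc_lap hf, hl _ (by simpa [norm_smul, abs_of_pos ht] using by nlinarith)]; simp)
  have e1 : H0 φ f x' ρ = (ρ^4)⁻¹ * ∫ y, ‖f y‖^2 * psi0 φ (ρ⁻¹ • (y - x')) := by
    rw [← cov _ x' hρ, H0, IP]
    congr 1; ext z
    simp only [sc, real_inner_self_eq_norm_sq, add_sub_cancel_left]
    rw [inv_smul_smul₀ hρ.ne']
  have e2 : ∫ z, ‖sc f x t z‖^2 * φ ‖z‖
      = (t^4)⁻¹ * ∫ y, ‖f y‖^2 * φ ‖t⁻¹ • (y - x)‖ := by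
    rw [← cov _ x ht]
    congr 1; ext z
    simp only [sc, add_sub_cancel_left]
    rw [inv_smul_smul₀ ht.ne']
  set J := ∫ y, ‖f y‖^2 * φ ‖t⁻¹ • (y - x)‖ with hJ
  have hJ0 : 0 ≤ J := integral_nonneg fun y => mul_nonneg (sq_nonneg _) (h.nonneg _)
  have e3 : ∫ y, ‖f y‖^2 * psi0 φ (ρ⁻¹ • (y - x')) ≤ M * J := by
    rw [hJ, ← integral_const_mul]
    have hcs : ∀ (g : E4 → ℝ) (c : E4) (s : ℝ), 0 < s → Continuous g →
        (∀ z, 1 ≤ ‖z‖ → g z = 0) → Integrable fun y => ‖f y‖^2 * g (s⁻¹ • (y - c)) := by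
      intro g c s hs hg hg0
      have hfc := hf.continuous
      refine Continuous.integrable_of_hasCompactSupport ?_ ?_
      · exact (hfc.norm.pow 2).mul (hg.comp (by fun_prop))
      · apply HasCompactSupport.intro (isCompact_closedBall c s)
        intro y hy
        rw [hg0, mul_zero]
        simp only [mem_closedBall, not_le, dist_eq_norm] at hy
        rw [norm_smul, norm_inv, Real.norm_of_nonneg hs.le, inv_mul_eq_div, le_div_iff₀ hs]
        linarith
    refine integral_mono (hcs _ _ _ hρ h.psi_cont h.psi_zero_ge)
      ((hcs _ _ _ ht h.pair.cg h.pair.zg).const_mul M) fun y => ?_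
    simp only
    by_cases hy : 1 ≤ ‖ρ⁻¹ • (y - x')‖
    · rw [h.psi_zero_ge _ hy]
      have := h.nonneg ‖t⁻¹ • (y - x)‖
      rw [mul_zero]
      positivity
    · rw [not_le, norm_smul, norm_inv, Real.norm_of_nonneg hρ.le, inv_mul_eq_div,
        div_lt_iff₀ hρ, ← dist_eq_norm] at hy
      have hφ : φ ‖t⁻¹ • (y - x)‖ = 1 := by
        apply h.one
        rw [norm_smul, norm_inv, Real.norm_of_nonneg ht.le, inv_mul_eq_div, div_le_iff₀ ht,
          ← dist_eq_norm]
        linarith [dist_triangle y x' x]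
      rw [hφ, mul_one, mul_comm M]
      exact mul_le_mul_of_nonneg_left (hM _) (sq_nonneg _)
  rw [e2] at h1
  change 4 * ((t^4)⁻¹ * J) ≤ H0 φ f x t at h1
  have hc : (ρ^4)⁻¹ ≤ 256 * (t^4)⁻¹ := by
    rw [← div_eq_mul_inv, inv_eq_one_div, div_le_div_iff₀ (by positivity) (by positivity)]
    have : t^4 ≤ (4*ρ)^4 := pow_le_pow_left₀ ht.le htρ 4
    nlinarith
  rw [e1]
  calc (ρ^4)⁻¹ * ∫ y, ‖f y‖^2 * psi0 φ (ρ⁻¹ • (y - x')) ≤ (ρ^4)⁻¹ * (M * J) :=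
        mul_le_mul_of_nonneg_left e3 (by positivity)
    _ ≤ (256 * (t^4)⁻¹) * (M * J) := mul_le_mul_of_nonneg_right hc (by positivity)
    _ = 64 * M * (4 * ((t^4)⁻¹ * J)) := by ring
    _ ≤ _ := mul_le_mul_of_nonneg_left h1 (by positivity)

/-- the deviation from homogeneity -/
def fE (u : E4 → F) (x : E4) (c : ℝ) (y : E4) : F := fderiv ℝ u y (y - x) - c • u y

lemma vf_eq (u : E4 → F) (x : E4) : vf u 0 1 (-x) 1 = fun y => fderiv ℝ u y (y - x) := by
  ext y; simp [vf, neg_add_eq_sub]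

lemma eul_smooth {u : E4 → F} (hu : ContDiff ℝ (⊤ : ℕ∞) u) (x : E4) :
    ContDiff ℝ (⊤ : ℕ∞) (fun y => fderiv ℝ u y (y - x)) := by
  rw [← vf_eq]; exact vf_smooth hu _ _ _ _

lemma eul_pd {u : E4 → F} (hu : ContDiff ℝ (⊤ : ℕ∞) u) (x y w : E4) :
    fderiv ℝ (fun y => fderiv ℝ u y (y - x)) y w =
      fderiv ℝ (fun y => fderiv ℝ u y w) y (y - x) + fderiv ℝ u y w := by
  have := vf_pd hu 0 1 (-x) 1 y w
  rw [vf_eq, vf_eq] at this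
  simpa using this

lemma fE_smooth {u : E4 → F} (hu : ContDiff ℝ (⊤ : ℕ∞) u) (x : E4) (c : ℝ) :
    ContDiff ℝ (⊤ : ℕ∞) (fE u x c) := (eul_smooth hu x).sub (hu.const_smul c)

lemma fE_lap {u : E4 → F} (hu : ContDiff ℝ (⊤ : ℕ∞) u) (x : E4) (c : ℝ) {S : Set E4}
    (hS : IsOpen S) (hl : ∀ y ∈ S, lap u y = 0) : ∀ y ∈ S, lap (fE u x c) y = 0 := by
  intro y hy
  have h1 : ∀ w, (fun y => fderiv ℝ (fE u x c) y w) = fun y =>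
      (fderiv ℝ (fun y => fderiv ℝ u y w) y (y - x) + fderiv ℝ u y w) - c • fderiv ℝ u y w := by
    intro w; ext y
    unfold fE
    rw [fderiv_fun_sub ((eul_smooth hu x).differentiable (by simp) y)
      ((hu.const_smul c).differentiable (by simp) y),
      fderiv_fun_const_smul (hu.differentiable (by simp) y)]
    simp only [sub_apply, smul_apply]
    rw [eul_pd hu]
  have h2 : ∀ w, fderiv ℝ (fun y => fderiv ℝ (fE u x c) y w) y w =
      fderiv ℝ (fun y => fderiv ℝ (fun y => fderiv ℝ u y w) y w) y (y - x)
        + (2 - c) • fderiv ℝ (fun y => fderiv ℝ u y w) y w := by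
    intro w
    rw [h1]
    have a1 := (eul_smooth (smooth_pd hu w) x).differentiable (by simp) y
    have a2 := (smooth_pd hu w).differentiable (by simp) y
    rw [fderiv_fun_sub (a1.fun_add a2) (a2.fun_const_smul c), fderiv_fun_add a1 a2,
      fderiv_fun_const_smul a2]
    simp only [sub_apply, smul_apply, add_apply]
    rw [eul_pd (smooth_pd hu w)]
    module
  unfold lap
  simp_rw [h2]
  rw [Finset.sum_add_distrib, ← Finset.smul_sum]
  have h3 := hl y hy
  have h4 : fderiv ℝ (lap u) y = 0 := by
    have : lap u =ᶠ[nhds y] fun _ => 0 := by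
      filter_upwards [hS.mem_nhds hy] with z hz using hl z hz
    rw [this.fderiv_eq]; simp
  have h5 : fderiv ℝ (lap u) y (y - x) =
      ∑ i, fderiv ℝ (fun y => fderiv ℝ (fun y => fderiv ℝ u y (ei i)) y (ei i)) y (y - x) := by
    unfold lap
    rw [fderiv_fun_sum fun i _ => (smooth_pd (smooth_pd hu (ei i)) (ei i)).differentiable (by simp) y]
    simp
  rw [← h5, h4]
  unfold lap at h3
  rw [h3]; simp

end Helpers3

section Helpers4

lemma real_core {H D E : ℝ → ℝ} {r Λ : ℝ} (hr : 0 < r)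
    (hH : ∀ t ∈ Set.Ioc 0 (4 * r), 0 < H t) (hD : ∀ t ∈ Set.Ioc 0 (4 * r), 0 ≤ D t)
    (hN : ∀ t ∈ Set.Ioc 0 (4 * r), D t / H t ≤ Λ)
    (hH' : ∀ t ∈ Set.Ioc 0 (4 * r), HasDerivAt H (2 / t * D t) t)
    (hD' : ∀ t ∈ Set.Ioc 0 (4 * r), HasDerivAt D (2 / t * E t) t)
    (hcs : ∀ t ∈ Set.Ioc 0 (4 * r), (D t)^2 ≤ E t * H t) :
    0 ≤ D (4 * r) / H (4 * r) - D (r / 4) / H (r / 4) ∧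
    D (4 * r) / H (4 * r) - D (r / 4) / H (r / 4) ≤ Λ ∧
    ∃ t ∈ Set.Ioo (2 * r) (4 * r), E t - (D t)^2 / H t ≤
      (D (4 * r) / H (4 * r) - D (r / 4) / H (r / 4)) * ((16 : ℝ)^(2 * Λ) * H (r / 4)) := by
  have hN' : ∀ t ∈ Set.Ioc 0 (4 * r), HasDerivAt (fun t => D t / H t)
      (2 / t * (E t - (D t)^2 / H t) / H t) t := by
    intro t ht
    have h0 := (hH t ht).ne'
    refine ((hD' t ht).div (hH' t ht) h0).congr_deriv ?_
    field_simp
  have hQ : ∀ t ∈ Set.Ioc 0 (4 * r), 0 ≤ E t - (D t)^2 / H t := by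
    intro t ht
    rw [sub_nonneg, div_le_iff₀ (hH t ht)]
    exact hcs t ht
  have hsub : ∀ t, t ∈ Set.Icc (r/4) (4 * r) → t ∈ Set.Ioc 0 (4 * r) := by
    intro t ht; exact ⟨by linarith [ht.1], ht.2⟩
  have hmonoN : MonotoneOn (fun t => D t / H t) (Set.Icc (r/4) (4*r)) := by
    refine monotoneOn_of_hasDerivWithinAt_nonneg (convex_Icc _ _)
      (fun t ht => (hN' t (hsub t ht)).continuousAt.continuousWithinAt)
      (fun t ht => (hN' t (hsub t (interior_subset ht))).hasDerivWithinAt) ?_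
    intro t ht
    have ht := hsub t (interior_subset ht)
    have := hQ t ht
    have := hH t ht
    have := ht.1
    positivity
  have hmonoH : MonotoneOn H (Set.Icc (r/4) (4*r)) := by
    refine monotoneOn_of_hasDerivWithinAt_nonneg (convex_Icc _ _)
      (fun t ht => (hH' t (hsub t ht)).continuousAt.continuousWithinAt)
      (fun t ht => (hH' t (hsub t (interior_subset ht))).hasDerivWithinAt) ?_
    intro t ht
    have ht := hsub t (interior_subset ht)
    have := hD t ht
    have := ht.1
    positivity
  have hG' : ∀ t ∈ Set.Ioc 0 (4 * r), HasDerivAt (fun t => H t * t^(-(2*Λ)))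
      (2 / t * D t * t^(-(2*Λ)) + H t * (-(2*Λ) * t^(-(2*Λ) - 1))) t := by
    intro t ht
    exact (hH' t ht).mul (Real.hasDerivAt_rpow_const (Or.inl ht.1.ne'))
  have hantiG : AntitoneOn (fun t => H t * t^(-(2*Λ))) (Set.Icc (r/4) (4*r)) := by
    refine antitoneOn_of_hasDerivWithinAt_nonpos (convex_Icc _ _)
      (fun t ht => (hG' t (hsub t ht)).continuousAt.continuousWithinAt)
      (fun t ht => (hG' t (hsub t (interior_subset ht))).hasDerivWithinAt) ?_
    intro t ht
    have ht := hsub t (interior_subset ht)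
    have h1 := hN t ht
    rw [div_le_iff₀ (hH t ht)] at h1
    have h0 := ht.1
    have h2 : (0:ℝ) < t^(-(2*Λ)) := Real.rpow_pos_of_pos h0 _
    rw [Real.rpow_sub_one h0.ne']
    have : 2 / t * D t * t^(-(2*Λ)) + H t * (-(2*Λ) * (t^(-(2*Λ)) / t))
      = (2 / t * t^(-(2*Λ))) * (D t - Λ * H t) := by field_simp; ring
    rw [this]
    exact mul_nonpos_of_nonneg_of_nonpos (by positivity) (by linarith)
  have m1 : r/4 ∈ Set.Icc (r/4) (4*r) := ⟨le_rfl, by linarith⟩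
  have m4 : 4*r ∈ Set.Icc (r/4) (4*r) := ⟨by linarith, le_rfl⟩
  have m2 : 2*r ∈ Set.Icc (r/4) (4*r) := ⟨by linarith, by linarith⟩
  have hdb : H (4*r) ≤ (16:ℝ)^(2*Λ) * H (r/4) := by
    have h1 := hantiG m1 m4 (by linarith)
    simp only at h1
    have e : 4 * r = 16 * (r/4) := by ring
    rw [show (4*r)^(-(2*Λ)) = (16:ℝ)^(-(2*Λ)) * (r/4)^(-(2*Λ)) by
      rw [e, Real.mul_rpow (by norm_num) (by positivity)]] at h1
    have h2 : (0:ℝ) < (r/4)^(-(2*Λ)) := Real.rpow_pos_of_pos (by positivity) _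
    rw [← mul_assoc] at h1
    have h3 := le_of_mul_le_mul_right h1 h2
    rw [Real.rpow_neg (by norm_num), ← div_eq_mul_inv, div_le_iff₀ (by positivity)] at h3
    linarith
  set W := D (4 * r) / H (4 * r) - D (r / 4) / H (r / 4) with hW
  have hW0 : 0 ≤ W := sub_nonneg.2 (hmonoN m1 m4 (by linarith))
  refine ⟨hW0, ?_, ?_⟩
  · have h1 := hN _ (hsub _ m4)
    have h2 : 0 ≤ D (r/4) / H (r/4) := div_nonneg (hD _ (hsub _ m1)) (hH _ (hsub _ m1)).le
    linarith
  · have hs2 : ∀ t ∈ Set.Icc (2*r) (4*r), t ∈ Set.Ioc 0 (4*r) := fun t ht =>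
      ⟨by linarith [ht.1], ht.2⟩
    obtain ⟨t, ht, he⟩ := exists_hasDerivAt_eq_slope (fun t => D t / H t)
      (fun t => 2 / t * (E t - (D t)^2 / H t) / H t) (by linarith : 2*r < 4*r)
      (fun t ht => (hN' t (hs2 t ht)).continuousAt.continuousWithinAt)
      (fun t ht => hN' t (hs2 t (Set.Ioo_subset_Icc_self ht)))
    refine ⟨t, ht, ?_⟩
    have htm := hs2 t (Set.Ioo_subset_Icc_self ht)
    have hle : D (4*r) / H (4*r) - D (2*r) / H (2*r) ≤ W := by
      have := hmonoN m1 m2 (by linarith)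
      simp only at this
      linarith
    have hHt := hH t htm
    have ht0 := htm.1
    set Q := E t - (D t)^2 / H t with hQd
    have hQe : Q = (D (4*r) / H (4*r) - D (2*r) / H (2*r)) * (t / (4 * r)) * H t := by
      have h1 : 4 * r - 2 * r = 2 * r := by ring
      rw [h1] at he
      have h2 : Q = (2 / t * Q / H t) * (t * H t / 2) := by field_simp
      rw [h2, he]
      field_simp
      ring
    have hHt4 : H t ≤ H (4*r) := hmonoH ⟨by linarith [ht.1], ht.2.le⟩ m4 ht.2.le
    have ht4 : t / (4*r) ≤ 1 := by rw [div_le_one (by positivity)]; exact ht.2.le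
    rw [hQe, mul_assoc]
    refine mul_le_mul hle ?_ (by positivity) hW0
    calc t / (4*r) * H t ≤ 1 * H t := mul_le_mul_of_nonneg_right ht4 hHt.le
      _ ≤ _ := by linarith

end Helpers4

section Helpers5

variable {φ : ℝ → ℝ} {F : Type*} [NormedAddCommGroup F] [InnerProductSpace ℝ F]

lemma eu_sc {u : E4 → F} (hu : ContDiff ℝ (⊤ : ℕ∞) u) (x : E4) (t : ℝ) (z : E4) :
    eu (sc u x t) z = t • fderiv ℝ u (x + t • z) z := by
  unfold eu; rw [sc_fderiv hu]

lemma vf_zero_one {u : E4 → F} (hu : ContDiff ℝ (⊤ : ℕ∞) u) (x : E4) {t : ℝ} (ht : 0 < t) :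
    vf u x t 0 1 = fun z => t⁻¹ • eu (sc u x t) z := by
  ext z
  rw [eu_sc hu, smul_smul, inv_mul_cancel₀ ht.ne']
  simp [vf]

lemma H0_t (h : IsCut φ) {u : E4 → F} (hu : ContDiff ℝ (⊤ : ℕ∞) u) (x : E4) {t : ℝ}
    (ht : 0 < t) (hl : ∀ y ∈ ball x t, lap u y = 0) :
    HasDerivAt (H0 φ u x) (2 / t * D0 φ u x t) t := by
  have h1 := H0_deriv h hu x t 0 1
  simp only [smul_zero, add_zero, mul_one] at h1
  rw [vf_zero_one hu x ht, IP_smul, IP_comm, ← D0_eq h hu ht hl] at h1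
  have h2 : HasDerivAt (fun s => s - t) 1 t := by simpa using (hasDerivAt_id t).sub_const t
  have h3 := HasDerivAt.comp (h := fun s => s - t) (h₂ := fun s => H0 φ u x (t + s)) t
    (by simpa using h1) h2
  refine (h3.congr_deriv (by field_simp)).congr_of_eventuallyEq ?_
  exact Filter.Eventually.of_forall fun s => by simp

lemma D0_t (h : IsCut φ) {u : E4 → F} (hu : ContDiff ℝ (⊤ : ℕ∞) u) (x : E4) {t : ℝ}
    (ht : 0 < t) (hl : ∀ y ∈ ball x t, lap u y = 0) :
    HasDerivAt (D0 φ u x) (2 / t * IP φ (eu (sc u x t)) (eu (sc u x t))) t := by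
  have h1 := D0_deriv h hu x ht hl 0 1
  simp only [smul_zero, add_zero, mul_one] at h1
  rw [vf_zero_one hu x ht, IP_smul] at h1
  have h2 : HasDerivAt (fun s => s - t) 1 t := by simpa using (hasDerivAt_id t).sub_const t
  have h3 := HasDerivAt.comp (h := fun s => s - t) (h₂ := fun s => D0 φ u x (t + s)) t
    (by simpa using h1) h2
  refine (h3.congr_deriv (by field_simp)).congr_of_eventuallyEq ?_
  exact Filter.Eventually.of_forall fun s => by simp

lemma D0_nonneg (h : IsCut φ) (u : E4 → F) (x : E4) (t : ℝ) : 0 ≤ D0 φ u x t :=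
  integral_nonneg fun _ => mul_nonneg (Finset.sum_nonneg fun _ _ => by positivity) (h.nonneg _)

lemma one_center (h : IsCut φ) {M : ℝ} (hM0 : 0 < M) (hM : ∀ z, psi0 φ z ≤ M) {u : E4 → F}
    (hu : ContDiff ℝ (⊤ : ℕ∞) u) {x₀ x : E4} {r Λ : ℝ} (hr : 0 < r)
    (hl : ∀ y ∈ ball x₀ (4 * r), lap u y = 0)
    (hH : ∀ t ∈ Set.Ioc 0 (4 * r), 0 < H0 φ u x₀ t)
    (hN : ∀ t ∈ Set.Ioc 0 (4 * r), D0 φ u x₀ t / H0 φ u x₀ t ≤ Λ)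
    (hx : dist x x₀ ≤ r / 4) :
    ∃ c W, W = D0 φ u x₀ (4 * r) / H0 φ u x₀ (4 * r) - D0 φ u x₀ (r / 4) / H0 φ u x₀ (r / 4) ∧
      0 ≤ c ∧ c ≤ Λ ∧ 0 ≤ W ∧ W ≤ Λ ∧
      H0 φ (fE u x₀ c) x r ≤ ((64 * M)^2 * (16:ℝ)^(2*Λ)) * W * H0 φ u x r := by
  have hlt : ∀ t ∈ Set.Ioc 0 (4 * r), ∀ y ∈ ball x₀ t, lap u y = 0 := fun t ht y hy =>
    hl y (ball_subset_ball ht.2 hy)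
  have hcU : ∀ t, Continuous (sc u x₀ t) := fun t => (sc_smooth hu x₀ t).continuous
  have hcE : ∀ t, Continuous (eu (sc u x₀ t)) := fun t =>
    (eu_smooth (sc_smooth hu x₀ t)).continuous
  obtain ⟨hW0, hW1, t, ht, hE⟩ := real_core (H := H0 φ u x₀) (D := D0 φ u x₀)
    (E := fun t => IP φ (eu (sc u x₀ t)) (eu (sc u x₀ t))) hr hH
    (fun t _ => D0_nonneg h u x₀ t) hN (fun t ht => H0_t h hu x₀ ht.1 (hlt t ht))
    (fun t ht => D0_t h hu x₀ ht.1 (hlt t ht))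
    (fun t ht => by
      rw [D0_eq h hu ht.1 (hlt t ht)]; exact IP_cs h (hcE t) (hcU t))
  have ht' : t ∈ Set.Ioc 0 (4 * r) := ⟨by linarith [ht.1], ht.2.le⟩
  refine ⟨D0 φ u x₀ t / H0 φ u x₀ t, _, rfl, div_nonneg (D0_nonneg h u x₀ t) (hH t ht').le,
    hN t ht', hW0, hW1, ?_⟩
  set W := D0 φ u x₀ (4 * r) / H0 φ u x₀ (4 * r) - D0 φ u x₀ (r / 4) / H0 φ u x₀ (r / 4) with hW
  set c := D0 φ u x₀ t / H0 φ u x₀ t with hc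
  have e1 : H0 φ (fE u x₀ c) x₀ t =
      IP φ (eu (sc u x₀ t)) (eu (sc u x₀ t)) - (D0 φ u x₀ t)^2 / H0 φ u x₀ t := by
    have e2 : sc (fE u x₀ c) x₀ t = fun z => eu (sc u x₀ t) z - c • sc u x₀ t z := by
      ext z; rw [eu_sc hu]; simp [sc, fE]
    have h0 := hH t ht'
    rw [H0, e2, IP_sub_smul h (hcE t) (hcU t), ← D0_eq h hu ht'.1 (hlt t ht'), ← H0, hc]
    field_simp; ring
  have hlf := fE_lap hu x₀ c isOpen_ball hl
  have s1 := H0_comp h hM0 hM (fE_smooth hu x₀ c) (x := x₀) (x' := x) (t := t) (ρ := r) ht'.1 hr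
    ht'.2 (fun y hy => hlf y (ball_subset_ball ht'.2 hy)) (by linarith [ht.1])
  have s2 := H0_comp h hM0 hM hu (x := x) (x' := x₀) (t := r) (ρ := r / 4) hr (by linarith)
    (by linarith) (fun y hy => hl y (by
      rw [mem_ball] at hy ⊢
      linarith [dist_triangle y x x₀])) (by rw [dist_comm]; linarith)
  rw [e1] at s1
  have hp : (0:ℝ) ≤ W * 16^(2*Λ) := mul_nonneg hW0 (by positivity)
  calc _ ≤ _ := s1
    _ ≤ 64 * M * (W * (16^(2*Λ) * H0 φ u x₀ (r/4))) := by gcongr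
    _ = 64 * M * ((W * 16^(2*Λ)) * H0 φ u x₀ (r/4)) := by ring
    _ ≤ 64 * M * ((W * 16^(2*Λ)) * (64 * M * H0 φ u x r)) := by gcongr
    _ = _ := by ring

lemma IP_three (h : IsCut φ) {A B C : E4 → F} (hA : Continuous A) (hB : Continuous B)
    (hC : Continuous C) : IP φ (fun z => A z + B z + C z) (fun z => A z + B z + C z) ≤
      3 * (IP φ A A + IP φ B B + IP φ C C) := by
  have e : 3 * (IP φ A A + IP φ B B + IP φ C C) = ∫ z, 3 * (⟪A z, A z⟫ * psi0 φ z
      + ⟪B z, B z⟫ * psi0 φ z + ⟪C z, C z⟫ * psi0 φ z) := by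
    have e1 := integral_add ((IP_integ h hA hA).add (IP_integ h hB hB)) (IP_integ h hC hC)
    have e2 := integral_add (IP_integ h hA hA) (IP_integ h hB hB)
    simp only [Pi.add_apply] at e1
    rw [integral_const_mul, e1, e2]
    rfl
  rw [e]
  unfold IP
  refine integral_mono (IP_integ h ((hA.add hB).add hC) ((hA.add hB).add hC))
    ((((IP_integ h hA hA).add (IP_integ h hB hB)).add (IP_integ h hC hC)).const_mul 3) ?_
  intro z
  have hp := h.psi_nonneg z
  have : ⟪A z + B z + C z, A z + B z + C z⟫ ≤
      3 * (⟪A z, A z⟫ + ⟪B z, B z⟫ + ⟪C z, C z⟫) := by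
    have k1 : 0 ≤ ⟪A z - B z, A z - B z⟫ := real_inner_self_nonneg
    have k2 : 0 ≤ ⟪A z - C z, A z - C z⟫ := real_inner_self_nonneg
    have k3 : 0 ≤ ⟪B z - C z, B z - C z⟫ := real_inner_self_nonneg
    simp only [inner_add_left, inner_add_right, inner_sub_left, inner_sub_right,
      real_inner_comm (A z) (B z), real_inner_comm (A z) (C z), real_inner_comm (B z) (C z)] at *
    linarith
  have := mul_le_mul_of_nonneg_right this hp
  simp only
  linarith

set_option maxHeartbeats 1000000 in
lemma core (h : IsCut φ) {M : ℝ} (hM0 : 0 < M) (hM : ∀ z, psi0 φ z ≤ M) {u : E4 → F}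
    (hu : ContDiff ℝ (⊤ : ℕ∞) u) {x₁ x₂ x : E4} {r Λ C1 C2 : ℝ} (hΛ : 0 < Λ)
    (hC1 : C1 = (64 * M)^2 * (16:ℝ)^(2*Λ)) (hC2 : C2 = 3 * (2 * C1 * Λ + Λ^2)) (hr : 0 < r)
    (hl1 : ∀ y ∈ ball x₁ (4 * r), lap u y = 0)
    (hl2 : ∀ y ∈ ball x₂ (4 * r), lap u y = 0)
    (hH1 : ∀ t ∈ Set.Ioc 0 (4 * r), 0 < H0 φ u x₁ t)
    (hH2 : ∀ t ∈ Set.Ioc 0 (4 * r), 0 < H0 φ u x₂ t)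
    (hN1 : ∀ t ∈ Set.Ioc 0 (4 * r), D0 φ u x₁ t / H0 φ u x₁ t ≤ Λ)
    (hN2 : ∀ t ∈ Set.Ioc 0 (4 * r), D0 φ u x₂ t / H0 φ u x₂ t ≤ Λ)
    (hne : x₁ ≠ x₂) (h12 : dist x₁ x₂ ≤ r / 4) (hx : x ∈ segment ℝ x₁ x₂)
    (hHx : 0 < H0 φ u x r) :
    ∃ d : ℝ, HasDerivAt (fun t : ℝ => D0 φ u (x + t • (‖x₂ - x₁‖⁻¹ • (x₂ - x₁))) r /
        H0 φ u (x + t • (‖x₂ - x₁‖⁻¹ • (x₂ - x₁))) r) d 0 ∧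
      dist x₁ x₂ * |d| ≤ 2 * Real.sqrt (C1 * C2) *
        (Real.sqrt (D0 φ u x₁ (4 * r) / H0 φ u x₁ (4 * r) -
            D0 φ u x₁ (r / 4) / H0 φ u x₁ (r / 4)) +
          Real.sqrt (D0 φ u x₂ (4 * r) / H0 φ u x₂ (4 * r) -
            D0 φ u x₂ (r / 4) / H0 φ u x₂ (r / 4))) := by
  have hd1 : dist x x₁ ≤ r / 4 := by
    have := (mem_segment_iff_wbtw.1 hx).dist_add_dist
    rw [dist_comm]; linarith [dist_nonneg (x := x) (y := x₂)]
  have hd2 : dist x x₂ ≤ r / 4 := by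
    have := (mem_segment_iff_wbtw.1 hx).dist_add_dist
    linarith [dist_nonneg (x := x₁) (y := x)]
  obtain ⟨c₁, W₁, e₁, hc₁, hc₁', hW₁, hW₁', hf₁⟩ := one_center h hM0 hM hu hr hl1 hH1 hN1 hd1
  obtain ⟨c₂, W₂, e₂, hc₂, hc₂', hW₂, hW₂', hf₂⟩ := one_center h hM0 hM hu hr hl2 hH2 hN2 hd2
  rw [← e₁, ← e₂]
  rw [← hC1] at hf₁ hf₂
  have hC1p : 0 < C1 := by rw [hC1]; positivity
  have hC2p : 0 < C2 := by rw [hC2]; positivity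
  have hlx : ∀ y ∈ ball x r, lap u y = 0 := fun y hy => hl1 y (by
    rw [mem_ball] at hy ⊢
    linarith [dist_triangle y x x₁])
  set v := ‖x₂ - x₁‖⁻¹ • (x₂ - x₁) with hv
  have hℓ : 0 < dist x₁ x₂ := dist_pos.2 hne
  have hℓv : dist x₁ x₂ • v = x₂ - x₁ := by
    rw [hv, smul_smul, dist_comm, dist_eq_norm, mul_inv_cancel₀, one_smul]
    rw [← dist_eq_norm, dist_comm]; exact hℓ.ne'
  set ℓ := dist x₁ x₂ with hℓd
  set U := sc u x r with hU
  set P := eu U with hP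
  set V := vf u x r v 0 with hV
  set F₁ := sc (fE u x₁ c₁) x r with hF₁
  set F₂ := sc (fE u x₂ c₂) x r with hF₂
  have cU : Continuous U := (sc_smooth hu x r).continuous
  have cP : Continuous P := (eu_smooth (sc_smooth hu x r)).continuous
  have cV : Continuous V := (vf_smooth hu x r v 0).continuous
  have cF₁ : Continuous F₁ := (sc_smooth (fE_smooth hu x₁ c₁) x r).continuous
  have cF₂ : Continuous F₂ := (sc_smooth (fE_smooth hu x₂ c₂) x r).continuous
  -- bound for the energy
  have hE : IP φ P P ≤ C2 * H0 φ u x r := by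
    obtain ⟨a, b, ha, hb, hab, hxe⟩ := hx
    have eP : P = fun z => a • F₁ z + b • F₂ z + (a * c₁ + b * c₂) • U z := by
      ext z
      rw [hP, hU, eu_sc hu, ← map_smul]
      have : r • z = a • (x + r • z - x₁) + b • (x + r • z - x₂) := by
        have e3 : a • (x + r • z - x₁) + b • (x + r • z - x₂) =
            (a + b) • (x + r • z) - (a • x₁ + b • x₂) := by
          simp only [smul_sub, add_smul]; abel
        rw [e3, hab, one_smul, hxe]; abel
      rw [congrArg (fderiv ℝ u (x + r • z)) this, map_add, map_smul, map_smul]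
      simp only [hF₁, hF₂, sc, fE, smul_sub, add_smul, mul_smul]
      abel
    have h3 := IP_three h (cF₁.const_smul a) (cF₂.const_smul b) (cU.const_smul (a * c₁ + b * c₂))
    have hs : ∀ (k : ℝ) (A : E4 → F), IP φ (fun z => k • A z) (fun z => k • A z) =
        k^2 * IP φ A A := by
      intro k A
      rw [IP_smul, IP_comm, IP_smul]; ring
    have hP2 : IP φ P P ≤ 3 * (a^2 * IP φ F₁ F₁ + b^2 * IP φ F₂ F₂
        + (a * c₁ + b * c₂)^2 * IP φ U U) := by
      rw [eP, ← hs, ← hs, ← hs]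
      exact h3
    have a1 : a ≤ 1 := by linarith
    have b1 : b ≤ 1 := by linarith
    have g1 : a^2 * IP φ F₁ F₁ ≤ C1 * Λ * H0 φ u x r := by
      have : a^2 ≤ 1 := pow_le_one₀ ha a1
      calc a^2 * IP φ F₁ F₁ ≤ 1 * IP φ F₁ F₁ := by
            gcongr; exact IP_nonneg h _
        _ = H0 φ (fE u x₁ c₁) x r := by rw [one_mul]; rfl
        _ ≤ C1 * W₁ * H0 φ u x r := hf₁
        _ ≤ _ := by gcongr
    have g2 : b^2 * IP φ F₂ F₂ ≤ C1 * Λ * H0 φ u x r := by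
      have : b^2 ≤ 1 := pow_le_one₀ hb b1
      calc b^2 * IP φ F₂ F₂ ≤ 1 * IP φ F₂ F₂ := by
            gcongr; exact IP_nonneg h _
        _ = H0 φ (fE u x₂ c₂) x r := by rw [one_mul]; rfl
        _ ≤ C1 * W₂ * H0 φ u x r := hf₂
        _ ≤ _ := by gcongr
    have g3 : (a * c₁ + b * c₂)^2 * IP φ U U ≤ Λ^2 * H0 φ u x r := by
      have : a * c₁ + b * c₂ ≤ Λ := by
        calc a * c₁ + b * c₂ ≤ a * Λ + b * Λ := by gcongr
          _ = Λ := by rw [← add_mul, hab, one_mul]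
      have : (a * c₁ + b * c₂)^2 ≤ Λ^2 := by gcongr
      exact mul_le_mul_of_nonneg_right this hHx.le
    rw [hC2]; linarith
  -- the derivative
  have dH := H0_deriv h hu x r v 0
  have dD := D0_deriv h hu x hr hlx v 0
  simp only [mul_zero, add_zero] at dH dD
  have dQ := dD.fun_div dH (by simpa using hHx.ne')
  simp only [zero_smul, add_zero] at dQ
  refine ⟨_, dQ, ?_⟩
  set N := D0 φ u x r / H0 φ u x r with hN
  set H := H0 φ u x r with hH
  have hHU : IP φ U U = H := rfl
  have hDU : IP φ P U = D0 φ u x r := (D0_eq h hu hr hlx).symm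
  have hDN : D0 φ u x r = N * H := by rw [hN]; field_simp
  set G : E4 → F := fun z => P z - N • U z with hG
  have cG : Continuous G := cP.sub (cU.const_smul N)
  have hGr : ∀ {A : E4 → F}, Continuous A → IP φ G A = IP φ P A - N * IP φ U A := by
    intro A hA
    rw [IP_comm, hG, IP_sub h hA cP (C := fun z => N • U z) (cU.const_smul N), IP_smul, IP_comm A P, IP_comm A U]
  have hGU : IP φ G U = 0 := by rw [hGr cU, hDU, hHU, hDN]; ring
  have hGG : IP φ G G ≤ C2 * H := by
    have : IP φ G G = IP φ P P - 2 * N * IP φ P U + N^2 * IP φ U U := IP_sub_smul h cP cU N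
    rw [this, hDU, hHU, hDN]
    have := mul_nonneg (sq_nonneg N) hHx.le
    linarith
  have eV : (fun z => ℓ • V z) = fun z => (F₁ z - F₂ z) + (c₁ - c₂) • U z := by
    ext z
    simp only [hV, vf, hF₁, hF₂, hU, sc, fE, zero_smul, add_zero]
    rw [← map_smul, hℓv]
    have : x₂ - x₁ = (x + r • z - x₁) - (x + r • z - x₂) := by abel
    rw [this, map_sub, sub_smul]; abel
  have hIV : ℓ * IP φ G V = IP φ G F₁ - IP φ G F₂ := by
    rw [← IP_smul, eV, IP_add h cG (B := fun z => F₁ z - F₂ z) (C := fun z => (c₁ - c₂) • U z)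
      (cF₁.sub cF₂) (cU.const_smul _), IP_sub h cG cF₁ cF₂, IP_smul,
      hGU]; ring
  have hd : ∀ X : ℝ, X = (2 * IP φ P V * H - D0 φ u x r * (2 * IP φ U V)) / H^2 →
      ℓ * X = 2 / H * (IP φ G F₁ - IP φ G F₂) := by
    intro X hX
    rw [← hIV, hGr cV, hX, hDN]; field_simp
  have habs : ∀ {A : E4 → F} {W : ℝ}, Continuous A → 0 ≤ W → IP φ A A ≤ C1 * W * H →
      |IP φ G A| ≤ Real.sqrt (C1 * C2) * Real.sqrt W * H := by
    intro A W hA hW hAA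
    have hcs := IP_cs h cG hA
    have : (IP φ G A)^2 ≤ (Real.sqrt (C1 * C2) * Real.sqrt W * H)^2 := by
      rw [mul_pow, mul_pow, Real.sq_sqrt (by positivity), Real.sq_sqrt hW]
      calc _ ≤ _ := hcs
        _ ≤ (C2 * H) * (C1 * W * H) := by
          gcongr
          exact IP_nonneg h _
        _ = _ := by ring
    exact abs_le_of_sq_le_sq this (by positivity)
  have k1 := habs cF₁ hW₁ hf₁
  have k2 := habs cF₂ hW₂ hf₂
  have hfin := hd _ rfl
  rw [← abs_of_pos hℓ, ← abs_mul, hfin, abs_mul, abs_of_pos (by positivity : 0 < 2 / H)]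
  calc 2 / H * |IP φ G F₁ - IP φ G F₂| ≤ 2 / H * (|IP φ G F₁| + |IP φ G F₂|) := by
        gcongr; exact abs_sub _ _
    _ ≤ 2 / H * (Real.sqrt (C1 * C2) * Real.sqrt W₁ * H + Real.sqrt (C1 * C2) * Real.sqrt W₂ * H) := by
        gcongr
    _ = _ := by field_simp

end Helpers5

section Helpers6

variable {φ : ℝ → ℝ} {F : Type*} [NormedAddCommGroup F] [InnerProductSpace ℝ F]
  [FiniteDimensional ℝ F]

lemma globalize {u : E4 → F} {Ω : Set E4} (hΩ : IsOpen Ω) (hu : IsHarmonicOn u Ω) {r : ℝ}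
    (hr : 0 < r) {x₁ : E4} (hb : closedBall x₁ (6 * r) ⊆ Ω) :
    ∃ U : E4 → F, ContDiff ℝ (⊤ : ℕ∞) U ∧ (∀ y ∈ ball x₁ (5 * r), U y = u y) ∧
      ∀ y ∈ ball x₁ (5 * r), lap U y = 0 := by
  let χ : ContDiffBump x₁ := ⟨5 * r, 11 / 2 * r, by positivity, by linarith⟩
  have hsub : ball x₁ (5 * r) ⊆ Ω := fun y hy => hb (by
    rw [mem_ball] at hy; rw [mem_closedBall]; linarith)
  have hEq : ∀ y ∈ ball x₁ (5 * r), χ y • u y = u y := fun y hy => by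
    rw [χ.one_of_mem_closedBall (ball_subset_closedBall hy), one_smul]
  refine ⟨fun y => χ y • u y, ?_, hEq, ?_⟩
  · rw [contDiff_iff_contDiffAt]
    intro y
    by_cases hy : y ∈ Ω
    · exact χ.contDiff.contDiffAt.smul (hu.1.contDiffAt (hΩ.mem_nhds hy))
    · have hy' : y ∈ (closedBall x₁ (11 / 2 * r))ᶜ := by
        intro h
        exact hy (hb (by rw [mem_closedBall] at h ⊢; linarith))
      have : (fun y => χ y • u y) =ᶠ[nhds y] fun _ => 0 := by
        filter_upwards [isClosed_closedBall.isOpen_compl.mem_nhds hy'] with z hz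
        rw [χ.zero_of_le_dist, zero_smul]
        simp only [Set.mem_compl_iff, mem_closedBall, not_le] at hz
        exact hz.le
      exact contDiffAt_const.congr_of_eventuallyEq this
  · intro y hy
    have h0 := hu.2 y (hsub hy)
    have hE : (fun y => χ y • u y) =ᶠ[nhds y] u := by
      filter_upwards [isOpen_ball.mem_nhds hy] with z hz using hEq z hz
    have hd : DifferentiableAt ℝ (fderiv ℝ u) y :=
      ((hu.1.contDiffAt (hΩ.mem_nhds (hsub hy))).fderiv_right (m := (⊤ : ℕ∞))
        (by simp)).differentiableAt (by simp)
    unfold lap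
    rw [← h0]
    refine Finset.sum_congr rfl fun i _ => ?_
    rw [iteratedFDeriv_two_apply]
    have h2 : (fun z => fderiv ℝ (fun y => χ y • u y) z (ei i)) =ᶠ[nhds y]
        fun z => fderiv ℝ u z (ei i) := by
      filter_upwards [hE.fderiv (𝕜 := ℝ)] with z hz
      rw [hz]
    rw [h2.fderiv_eq, fderiv_clm_apply hd (by fun_prop)]
    simp

lemma ball_map {x z : E4} {t : ℝ} (ht : 0 < t) (hz : ‖z‖ < 1) : x + t • z ∈ ball x t := by
  simpa [norm_smul, abs_of_pos ht] using by nlinarith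

lemma Hphi_eq_s18 (h : IsCut φ) {u U : E4 → F} {x : E4} {t : ℝ} (ht : 0 < t)
    (hUu : ∀ y ∈ ball x t, U y = u y) : Hphi φ u x t = t^3 * H0 φ U x t := by
  have e := cov (fun y => ‖u y‖ ^ 2 * ‖y - x‖⁻¹ * deriv φ (‖y - x‖ / t)) x ht
  have e2 : H0 φ U x t = ∫ z, (-t) * (‖u (x + t • z)‖ ^ 2 * ‖x + t • z - x‖⁻¹ *
      deriv φ (‖x + t • z - x‖ / t)) := by
    unfold H0 IP
    congr 1; ext z
    have hn : ‖x + t • z - x‖ = t * ‖z‖ := by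
      rw [add_sub_cancel_left, norm_smul, Real.norm_of_nonneg ht.le]
    rw [hn, mul_div_cancel_left₀ _ ht.ne']
    by_cases hz : ‖z‖ < 1
    · rw [sc, hUu _ (ball_map ht hz), real_inner_self_eq_norm_sq, psi0, mul_inv]
      field_simp
    · push Not at hz
      rw [psi0, h.dzero_ge hz]; simp
  rw [e2, integral_const_mul, e, Hphi]
  field_simp

lemma Dphi_eq_s18 (h : IsCut φ) {u U : E4 → F} {x : E4} {t : ℝ} (ht : 0 < t)
    (hUu : ∀ y ∈ ball x t, U y = u y) : Dphi φ u x t = t^2 * D0 φ U x t := by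
  have e := cov (fun y => gradSq u y * φ (‖y - x‖ / t)) x ht
  have e2 : D0 φ U x t = ∫ z, t^2 * (gradSq u (x + t • z) * φ (‖x + t • z - x‖ / t)) := by
    unfold D0
    congr 1; ext z
    have hn : ‖x + t • z - x‖ = t * ‖z‖ := by
      rw [add_sub_cancel_left, norm_smul, Real.norm_of_nonneg ht.le]
    rw [hn, mul_div_cancel_left₀ _ ht.ne']
    by_cases hz : ‖z‖ < 1
    · have hE : U =ᶠ[nhds (x + t • z)] u := by
        filter_upwards [isOpen_ball.mem_nhds (ball_map ht hz)] with y hy using hUu y hy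
      rw [hE.fderiv_eq, gradSq, ← mul_assoc, Finset.mul_sum]
      congr 1
      refine Finset.sum_congr rfl fun i _ => ?_
      rw [norm_smul, mul_pow, Real.norm_of_nonneg ht.le]
    · push Not at hz
      rw [h.zero _ hz]; simp
  rw [e2, integral_const_mul, e, Dphi]
  field_simp

lemma Nphi_eq (h : IsCut φ) {u U : E4 → F} {x : E4} {t : ℝ} (ht : 0 < t)
    (hUu : ∀ y ∈ ball x t, U y = u y) : Nphi φ u x t = D0 φ U x t / H0 φ U x t := by
  rw [Nphi, Hphi_eq_s18 h ht hUu, Dphi_eq_s18 h ht hUu, ← mul_assoc,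
    show t * t^2 = t^3 by ring, mul_div_mul_left _ _ (by positivity)]

end Helpers6

/-- Flat-case analogue of Proposition 6.1: the frequency pinching estimate along a
segment. Here `W_{r/4}^{4r}(x) = N_φ(x,4r) − N_φ(x,r/4)` and `∂_v N_φ(x,r)` is the
directional derivative of `N_φ(·,r)` at `x` in the unit direction `v` of the segment. -/
theorem stmt_18 (φ : ℝ → ℝ) (hφs : ContDiff ℝ (⊤ : ℕ∞) φ) (hφa : Antitone φ)
    (hφ1 : ∀ t ≤ (3/4 : ℝ), φ t = 1) (hφ0 : ∀ t, (1:ℝ) ≤ t → φ t = 0)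
    (Λ : ℝ) (hΛ : 0 < Λ) :
    ∃ C > (0:ℝ),
      ∀ (F : Type) [NormedAddCommGroup F] [InnerProductSpace ℝ F] [FiniteDimensional ℝ F],
      ∀ (u : E4 → F) (Ω : Set E4), IsOpen Ω → IsHarmonicOn u Ω →
      ∀ (r : ℝ), 0 < r → ∀ x₁ x₂ : E4, x₁ ≠ x₂ → dist x₁ x₂ ≤ r / 4 →
      closedBall x₁ (6 * r) ⊆ Ω →
      (∀ t ∈ Set.Ioc (0:ℝ) (4 * r),
        (0 < Hphi φ u x₁ t ∧ Nphi φ u x₁ t ≤ Λ) ∧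
        (0 < Hphi φ u x₂ t ∧ Nphi φ u x₂ t ≤ Λ)) →
      (∀ x' ∈ segment ℝ x₁ x₂, 0 < Hphi φ u x' r) →
      ∀ x ∈ segment ℝ x₁ x₂,
      ∃ d : ℝ,
        HasDerivAt (fun t : ℝ => Nphi φ u (x + t • (‖x₂ - x₁‖⁻¹ • (x₂ - x₁))) r) d 0 ∧
        dist x₁ x₂ * |d| ≤
          C * (Real.sqrt (Nphi φ u x₁ (4 * r) - Nphi φ u x₁ (r / 4)) +
               Real.sqrt (Nphi φ u x₂ (4 * r) - Nphi φ u x₂ (r / 4))) := by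
  have h : IsCut φ := ⟨hφs, hφa, hφ1, hφ0⟩
  obtain ⟨M, hM0, hM⟩ := h.psi_bdd
  obtain ⟨C1, hC1⟩ : ∃ C1, C1 = (64 * M)^2 * (16:ℝ)^(2*Λ) := ⟨_, rfl⟩
  obtain ⟨C2, hC2⟩ : ∃ C2, C2 = 3 * (2 * C1 * Λ + Λ^2) := ⟨_, rfl⟩
  have hC1p : 0 < C1 := by rw [hC1]; positivity
  have hC2p : 0 < C2 := by rw [hC2]; positivity
  refine ⟨2 * Real.sqrt (C1 * C2), by positivity, ?_⟩
  intro F _ _ _ u Ω hΩ hu r hr x₁ x₂ hne h12 hb hHN hseg x hx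
  obtain ⟨U, hU, hUu, hUl⟩ := globalize hΩ hu hr hb
  have hs1 : ∀ t ≤ 4 * r, ball x₁ t ⊆ ball x₁ (5 * r) := fun t ht =>
    ball_subset_ball (by linarith)
  have hs2 : ∀ t ≤ 4 * r, ball x₂ t ⊆ ball x₁ (5 * r) := fun t ht =>
    ball_subset_ball' (by rw [dist_comm]; linarith)
  have hd1 : dist x x₁ ≤ r / 4 := by
    have := (mem_segment_iff_wbtw.1 hx).dist_add_dist
    rw [dist_comm]; linarith [dist_nonneg (x := x) (y := x₂)]
  have cN1 : ∀ t ∈ Set.Ioc 0 (4 * r), Nphi φ u x₁ t = D0 φ U x₁ t / H0 φ U x₁ t := fun t ht =>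
    Nphi_eq h ht.1 fun y hy => hUu y (hs1 t ht.2 hy)
  have cN2 : ∀ t ∈ Set.Ioc 0 (4 * r), Nphi φ u x₂ t = D0 φ U x₂ t / H0 φ U x₂ t := fun t ht =>
    Nphi_eq h ht.1 fun y hy => hUu y (hs2 t ht.2 hy)
  have cH : ∀ {t : ℝ} {y : E4}, 0 < t → ball y t ⊆ ball x₁ (5 * r) → 0 < Hphi φ u y t →
      0 < H0 φ U y t := by
    intro t y ht hsub hp
    rw [Hphi_eq_s18 h ht fun z hz => hUu z (hsub hz)] at hp
    exact pos_of_mul_pos_right hp (by positivity)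
  have hHx : 0 < H0 φ U x r := cH hr (ball_subset_ball' (by linarith)) (hseg x hx)
  obtain ⟨d, hd, hle⟩ := core h hM0 hM hU hΛ hC1 hC2 hr
    (fun y hy => hUl y (hs1 _ le_rfl hy)) (fun y hy => hUl y (hs2 _ le_rfl hy))
    (fun t ht => cH ht.1 (hs1 t ht.2) (hHN t ht).1.1)
    (fun t ht => cH ht.1 (hs2 t ht.2) (hHN t ht).2.1)
    (fun t ht => by rw [← cN1 t ht]; exact (hHN t ht).1.2)
    (fun t ht => by rw [← cN2 t ht]; exact (hHN t ht).2.2) hne h12 hx hHx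
  refine ⟨d, hd.congr_of_eventuallyEq ?_, ?_⟩
  · have hcont : Filter.Tendsto (fun t : ℝ => x + t • (‖x₂ - x₁‖⁻¹ • (x₂ - x₁))) (nhds 0)
        (nhds x) := by
      have : Continuous (fun t : ℝ => x + t • (‖x₂ - x₁‖⁻¹ • (x₂ - x₁))) := by fun_prop
      simpa using this.tendsto 0
    filter_upwards [hcont (ball_mem_nhds x hr)] with t ht
    refine Nphi_eq h hr fun y hy => hUu y ?_
    have ht' : dist (x + t • (‖x₂ - x₁‖⁻¹ • (x₂ - x₁))) x < r := ht
    refine ball_subset_ball' ?_ hy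
    linarith [dist_triangle (x + t • (‖x₂ - x₁‖⁻¹ • (x₂ - x₁))) x x₁]
  · rw [cN1 _ ⟨by linarith, le_rfl⟩, cN1 _ ⟨by linarith, by linarith⟩,
      cN2 _ ⟨by linarith, le_rfl⟩, cN2 _ ⟨by linarith, by linarith⟩]
    exact hle
end
end
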